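/- arXiv:1712.01973 — 14 statements merged into one kernel-verified Lean document; each statement's English description precedes it below -/
import Mathlib

section
/- Let P and Q be rational polytopes in ℝ^d such that for every integer vector w ∈ ℤ^d and every real s > 0 one has L_{P+w}(s) = L_{Q+w}(s). Then P = Q. -/
open Set MeasureTheory Pointwise

/-- The set of integer lattice points in `ℝ^d` (as `Fin d → ℝ`). -/
def latticePts (d : ℕ) : Set (Fin d → ℝ) := {x | ∀ i, ∃ m : ℤ, x i = m}

/-- The real-parameter Ehrhart function: number of lattice points in `s • P`. -/
noncomputable def ehrhart {d : ℕ} (P : Set (Fin d → ℝ)) (s : ℝ) : ℕ :=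
  ((s • P) ∩ latticePts d).ncard

/-- Translate of a set by a vector. -/
def translateSet {d : ℕ} (P : Set (Fin d → ℝ)) (v : Fin d → ℝ) : Set (Fin d → ℝ) :=
  (fun x => x + v) '' P

/-- A polytope: convex hull of a nonempty finite set of points. -/
def IsPolytope {d : ℕ} (P : Set (Fin d → ℝ)) : Prop :=
  ∃ V : Finset (Fin d → ℝ), V.Nonempty ∧ P = convexHull ℝ (V : Set (Fin d → ℝ))

/-- A rational polytope: convex hull of a nonempty finite set of rational points. -/
def IsRationalPolytope {d : ℕ} (P : Set (Fin d → ℝ)) : Prop :=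
  ∃ V : Finset (Fin d → ℝ), V.Nonempty ∧ (∀ v ∈ V, ∀ i, ∃ q : ℚ, v i = (q : ℝ)) ∧
    P = convexHull ℝ (V : Set (Fin d → ℝ))

/-- Standard inner product on `Fin d → ℝ`. -/
def dotProd {d : ℕ} (a x : Fin d → ℝ) : ℝ := ∑ i, a i * x i

/-- A semi-rational polytope: a polytope expressible as a finite intersection of
half-spaces with integer normal vectors. -/
def IsSemiRationalPolytope {d : ℕ} (P : Set (Fin d → ℝ)) : Prop :=
  IsPolytope P ∧ ∃ (n : ℕ) (a : Fin n → Fin d → ℤ) (b : Fin n → ℝ),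
    P = ⋂ i, {x : Fin d → ℝ | dotProd (fun j => (a i j : ℝ)) x ≤ b i}

theorem common_denom {d : ℕ} (p : Fin d → ℝ) (hp : ∀ i, ∃ q : ℚ, p i = (q : ℝ)) :
    ∃ (n : ℕ) (a : Fin d → ℤ), 0 < n ∧ ∀ i, p i * n = a i := by
  choose q hq using hp
  refine ⟨∏ i, (q i).den, fun i => (q i).num * ∏ j ∈ Finset.univ.erase i, ((q j).den : ℤ), ?_, ?_⟩
  · exact Finset.prod_pos fun i _ => (q i).pos
  · intro i
    rw [← Finset.mul_prod_erase Finset.univ (fun i => (q i).den) (Finset.mem_univ i), hq i]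
    push_cast
    rw [← mul_assoc]
    congr 1
    exact_mod_cast Rat.mul_den_eq_num (q i)

theorem key_step {d : ℕ} (P Q : Set (Fin d → ℝ)) (B : ℝ)
    (hPB : ∀ x ∈ P, ∀ i, |x i| ≤ B) (hQB : ∀ x ∈ Q, ∀ i, |x i| ≤ B)
    (h : ∀ (w : Fin d → ℤ) (s : ℝ), 0 < s →
      ehrhart (translateSet P (fun i => (w i : ℝ))) s =
      ehrhart (translateSet Q (fun i => (w i : ℝ))) s)
    (p : Fin d → ℝ) (hpP : p ∈ P) (hp : ∀ i, ∃ q : ℚ, p i = (q : ℝ)) : p ∈ Q := by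
  obtain ⟨n, a, hn, ha⟩ := common_denom p hp
  obtain ⟨N, hN⟩ := exists_nat_gt (2 * B)
  have hn' : (0 : ℝ) < n := by exact_mod_cast hn
  set t : ℝ := N + 1 / n with ht
  have h1n : (0 : ℝ) < 1 / n := by positivity
  have htpos : 0 < t := by positivity
  have htB : 2 * B < t := by linarith
  have hpa : ∀ i, p i = t * a i - N * a i := by
    intro i
    rw [← ha i, ht]
    field_simp
    ring
  have huniq : ∀ R : Set (Fin d → ℝ), (∀ x ∈ R, ∀ i, |x i| ≤ B) → ∀ r ∈ R, ∀ y ∈ latticePts d,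
      t⁻¹ • (r + fun i => (((N : ℤ) * a i : ℤ) : ℝ)) = y → r = p ∧ y = fun i => (a i : ℝ) := by
    intro R hR r hr y hy hry
    have hr2 : ∀ i, r i = t * y i - N * a i := by
      intro i
      have := congrFun hry i
      simp only [Pi.smul_apply, Pi.add_apply, smul_eq_mul] at this
      rw [← this]
      push_cast
      field_simp
      ring
    have hya : ∀ i, y i = a i := by
      intro i
      obtain ⟨m, hm⟩ := hy i
      have h1 := abs_le.1 (hR r hr i)
      have h2 := abs_le.1 (hPB p hpP i)
      rw [hr2 i, hm] at h1
      rw [hpa i] at h2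
      have h3 : t * ((m - a i : ℤ) : ℝ) < t * 1 := by push_cast; linarith
      have h4 : t * (-1) < t * ((m - a i : ℤ) : ℝ) := by push_cast; linarith
      have h5 := lt_of_mul_lt_mul_left h3 htpos.le
      have h6 := lt_of_mul_lt_mul_left h4 htpos.le
      have h5' : m - a i < 1 := by exact_mod_cast h5
      have h6' : -1 < m - a i := by exact_mod_cast h6
      rw [hm]
      have : m = a i := by omega
      rw [this]
    refine ⟨?_, funext hya⟩
    funext i
    rw [hr2 i, hpa i, hya i]
  have hw := h (fun i => (N : ℤ) * a i) t⁻¹ (inv_pos.2 htpos)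
  have hPone : ehrhart (translateSet P (fun i => (((N : ℤ) * a i : ℤ) : ℝ))) t⁻¹ = 1 := by
    unfold ehrhart
    rw [Set.ncard_eq_one]
    refine ⟨fun i => (a i : ℝ), ?_⟩
    ext y
    constructor
    · rintro ⟨⟨_, ⟨r, hr, rfl⟩, hry⟩, hy⟩
      exact (huniq P hPB r hr y hy hry).2
    · intro hy
      rw [Set.mem_singleton_iff] at hy
      subst hy
      refine ⟨⟨_, ⟨p, hpP, rfl⟩, ?_⟩, fun i => ⟨a i, rfl⟩⟩
      funext i
      simp only [Pi.smul_apply, Pi.add_apply, smul_eq_mul]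
      rw [hpa i]
      push_cast
      field_simp
      ring
  rw [hPone] at hw
  unfold ehrhart at hw
  obtain ⟨y, hy⟩ := Set.ncard_eq_one.1 hw.symm
  have hmem := hy.symm ▸ Set.mem_singleton y
  obtain ⟨⟨_, ⟨r, hr, rfl⟩, hry⟩, hyl⟩ := hmem
  rw [← (huniq Q hQB r hr y hyl hry).1]
  exact hr

theorem poly_bound {d : ℕ} (P : Set (Fin d → ℝ)) (hP : IsRationalPolytope P) :
    ∃ B : ℝ, ∀ x ∈ P, ∀ i, |x i| ≤ B := by
  obtain ⟨V, -, -, rfl⟩ := hP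
  obtain ⟨B, hB⟩ := (isBounded_convexHull.2 V.finite_toSet.isBounded).exists_norm_le
  exact ⟨B, fun x hx i => (norm_le_pi_norm x i).trans (hB x hx)⟩

theorem poly_subset {d : ℕ} (P Q : Set (Fin d → ℝ))
    (hP : IsRationalPolytope P) (hQ : IsRationalPolytope Q)
    (h : ∀ (w : Fin d → ℤ) (s : ℝ), 0 < s →
      ehrhart (translateSet P (fun i => (w i : ℝ))) s =
      ehrhart (translateSet Q (fun i => (w i : ℝ))) s) : P ⊆ Q := by
  obtain ⟨B, hB⟩ := poly_bound P hP
  obtain ⟨C, hC⟩ := poly_bound Q hQ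
  obtain ⟨V, -, hV, hPV⟩ := hP
  obtain ⟨W, -, -, hQW⟩ := hQ
  have hQc : Convex ℝ Q := hQW ▸ convex_convexHull ℝ _
  have hVQ : (V : Set (Fin d → ℝ)) ⊆ Q := fun v hv =>
    key_step P Q (max B C) (fun x hx i => (hB x hx i).trans (le_max_left _ _))
      (fun x hx i => (hC x hx i).trans (le_max_right _ _)) h v
      (hPV ▸ subset_convexHull ℝ _ hv) (hV v hv)
  rw [hPV]
  exact convexHull_min hVQ hQc

/-- the real Ehrhart functions of all integer translates determine
a rational polytope uniquely. -/
theorem stmt1 {d : ℕ} (P Q : Set (Fin d → ℝ))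
    (hP : IsRationalPolytope P) (hQ : IsRationalPolytope Q)
    (h : ∀ (w : Fin d → ℤ) (s : ℝ), 0 < s →
      ehrhart (translateSet P (fun i => (w i : ℝ))) s =
      ehrhart (translateSet Q (fun i => (w i : ℝ))) s) :
    P = Q :=
  Set.Subset.antisymm (poly_subset P Q hP hQ h)
    (poly_subset Q P hQ hP fun w s hs => (h w s hs).symm)
end

section
/- Let P and Q be semi-rational polytopes in ℝ^d, each having codimension 0 or codimension 1. Suppose that L_{P+w}(s) = L_{Q+w}(s) for every integer vector w ∈ ℤ^d and every real s > 0. Then P = Q. -/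
open Set MeasureTheory Pointwise

lemma mem_aux {d : ℕ} (P : Set (Fin d → ℝ)) (w : Fin d → ℤ) (t : ℝ) (ht : 0 < t)
    (y : Fin d → ℝ) :
    y ∈ (t⁻¹ • translateSet P (fun i => (w i : ℝ))) ↔ t • y - (fun i => (w i : ℝ)) ∈ P := by
  rw [Set.mem_inv_smul_set_iff₀ ht.ne']
  unfold translateSet
  constructor
  · rintro ⟨x, hx, hxy⟩
    rw [← hxy]; simpa using hx
  · intro hx
    exact ⟨_, hx, by simp⟩

lemma agree_aux {d : ℕ} (P Q : Set (Fin d → ℝ)) (K : ℝ)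
    (hPK : ∀ x ∈ P, ∀ i, |x i| ≤ K) (hQK : ∀ x ∈ Q, ∀ i, |x i| ≤ K)
    (h : ∀ (w : Fin d → ℤ) (s : ℝ), 0 < s →
      ehrhart (translateSet P (fun i => (w i : ℝ))) s =
      ehrhart (translateSet Q (fun i => (w i : ℝ))) s)
    (δ : ℝ) (z w : Fin d → ℤ)
    (hx : (fun i => δ * (z i : ℝ) + (w i : ℝ)) ∈ P) :
    (fun i => δ * (z i : ℝ) + (w i : ℝ)) ∈ Q := by
  obtain ⟨T, hT⟩ := exists_nat_gt (|2 * K| + |δ|)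
  have ht0 : 0 < δ + T := by
    have := neg_abs_le δ; have := abs_nonneg (2 * K); linarith
  have htK : 2 * K < δ + T := by
    have := neg_abs_le δ; have := le_abs_self (2 * K); linarith
  have heq : (fun i => δ * (z i : ℝ) + (w i : ℝ)) =
      (δ + T) • (fun i => (z i : ℝ)) - (fun i => (((T : ℤ) * z i - w i : ℤ) : ℝ)) := by
    ext i; simp; ring
  have close : ∀ y y' : Fin d → ℝ, y ∈ latticePts d → y' ∈ latticePts d → ∀ u : Fin d → ℝ,
      (∀ i, |((δ + T) • y - u) i| ≤ K) → (∀ i, |((δ + T) • y' - u) i| ≤ K) → y = y' := by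
    intro y y' hy hy' u h1 h2
    ext i
    obtain ⟨m, hm⟩ := hy i
    obtain ⟨m', hm'⟩ := hy' i
    have h1 := abs_le.1 (h1 i)
    have h2 := abs_le.1 (h2 i)
    simp only [Pi.sub_apply, Pi.smul_apply, smul_eq_mul] at h1 h2
    rw [hm, hm'] at *
    have e1 : (m : ℝ) - m' < 1 := by
      by_contra hc
      push Not at hc
      nlinarith
    have e2 : (m' : ℝ) - m < 1 := by
      by_contra hc
      push Not at hc
      nlinarith
    have e1' : m - m' < 1 := by exact_mod_cast e1
    have e2' : m' - m < 1 := by exact_mod_cast e2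
    have : m = m' := by omega
    rw [this]
  have key := h (fun i => (T : ℤ) * z i - w i) (δ + T)⁻¹ (inv_pos.2 ht0)
  rw [heq] at hx ⊢
  have hzl : (fun i => (z i : ℝ)) ∈ latticePts d := fun i => ⟨z i, rfl⟩
  have hPc : ehrhart (translateSet P (fun i => (((T : ℤ) * z i - w i : ℤ) : ℝ))) (δ + T)⁻¹ = 1 := by
    unfold ehrhart
    rw [Set.ncard_eq_one]
    refine ⟨fun i => (z i : ℝ), ?_⟩
    ext y
    simp only [Set.mem_inter_iff, Set.mem_singleton_iff]
    rw [mem_aux P _ _ ht0]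
    constructor
    · rintro ⟨hy, hyl⟩
      exact close _ _ hyl hzl _ (hPK _ hy) (hPK _ hx)
    · rintro rfl
      exact ⟨hx, hzl⟩
  rw [hPc] at key
  have key := key.symm
  unfold ehrhart at key
  rw [Set.ncard_eq_one] at key
  obtain ⟨y, hy⟩ := key
  have hyy : y ∈ ({y} : Set (Fin d → ℝ)) := rfl
  rw [← hy] at hyy
  obtain ⟨hy1, hyl⟩ := hyy
  rw [mem_aux Q _ _ ht0] at hy1
  have := close _ _ hyl hzl _ (hQK _ hy1) (hPK _ hx)
  rw [this] at hy1
  exact hy1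

/-- points on integer translates of rational lines through the origin -/
def goodPts (d : ℕ) : Set (Fin d → ℝ) :=
  {x | ∃ (δ : ℝ) (z w : Fin d → ℤ), x = fun i => δ * (z i : ℝ) + (w i : ℝ)}

lemma rat_mul_good {d : ℕ} (c : ℝ) (q : Fin d → ℚ) (w : Fin d → ℤ) :
    (fun i => c * (q i : ℝ) + (w i : ℝ)) ∈ goodPts d := by
  obtain ⟨D, hD, M, hM⟩ : ∃ D : ℕ, D ≠ 0 ∧ ∃ M : Fin d → ℕ, ∀ i, D = (q i).den * M i :=
    ⟨∏ i, (q i).den, Finset.prod_ne_zero_iff.2 fun j _ => (q j).den_nz,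
      fun i => ∏ j ∈ Finset.univ.erase i, (q j).den,
      fun i => (Finset.mul_prod_erase _ _ (Finset.mem_univ i)).symm⟩
  refine ⟨c / D, fun i => (q i).num * (M i : ℤ), w, ?_⟩
  ext i
  have h1 : ((q i).den : ℝ) ≠ 0 := by exact_mod_cast (q i).den_nz
  have h2 : (M i : ℝ) ≠ 0 := by
    intro h0
    have h0' : M i = 0 := by exact_mod_cast h0
    exact hD (by rw [hM i, h0', mul_zero])
  have h3 : (q i : ℝ) = (q i).num / (q i).den := by exact_mod_cast (Rat.num_div_den (q i)).symm
  rw [hM i, h3]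
  push_cast
  field_simp

lemma denseRange_rat (d : ℕ) : DenseRange (fun (q : Fin d → ℚ) (i : Fin d) => (q i : ℝ)) :=
  DenseRange.piMap (fun _ => Rat.denseRange_cast)

lemma dotProd_cont {d : ℕ} (a : Fin d → ℝ) : Continuous (dotProd a) := by
  unfold dotProd; fun_prop

lemma hyper_dense {d : ℕ} (a : Fin d → ℤ) (ha : a ≠ 0) (b : ℝ) (x : Fin d → ℝ)
    (hx : dotProd (fun j => (a j : ℝ)) x = b) :
    x ∈ closure ({y | dotProd (fun j => (a j : ℝ)) y = b} ∩ goodPts d) := by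
  set α : Fin d → ℝ := fun j => (a j : ℝ) with hα
  obtain ⟨w, hw⟩ : ∃ w : Fin d → ℤ, dotProd α (fun i => (w i : ℝ)) ≠ b := by
    by_cases hb : b = 0
    · obtain ⟨i, hi⟩ := Function.ne_iff.1 ha
      refine ⟨Pi.single i 1, ?_⟩
      rw [hb]
      have : dotProd α (fun j => ((Pi.single i 1 : Fin d → ℤ) j : ℝ)) = a i := by
        unfold dotProd
        rw [Finset.sum_eq_single i]
        · simp [hα]
        · intro j _ hj; simp [hj]
        · simp
      rw [this]
      exact_mod_cast hi
    · exact ⟨0, by simpa [dotProd] using Ne.symm hb⟩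
  set ω : Fin d → ℝ := fun i => (w i : ℝ) with hω
  set β := b - dotProd α ω with hβ
  have hβ0 : β ≠ 0 := sub_ne_zero.2 hw.symm
  have hsub : dotProd α (x - ω) = β := by
    rw [hβ, ← hx]; simp [dotProd, mul_sub, Finset.sum_sub_distrib]
  let F : (Fin d → ℝ) → (Fin d → ℝ) := fun y => (β / dotProd α y) • y + ω
  have hFx : F (x - ω) = x := by
    simp [F, hsub, hβ0]
  have hFc : ContinuousAt F (x - ω) := by
    have h1 : ContinuousAt (dotProd α) (x - ω) := (dotProd_cont α).continuousAt
    have h2 : dotProd α (x - ω) ≠ 0 := by rw [hsub]; exact hβ0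
    exact ((continuousAt_const.div h1 h2).smul continuousAt_id).add continuousAt_const
  rw [mem_closure_iff_nhds]
  intro N hN
  rw [← hFx] at hN
  have hN1 : F ⁻¹' N ∈ nhds (x - ω) := hFc hN
  have hN2 : {y | dotProd α y ≠ 0} ∈ nhds (x - ω) :=
    (dotProd_cont α).continuousAt.eventually_ne (by rw [hsub]; exact hβ0)
  have := Filter.inter_mem hN1 hN2
  obtain ⟨q, hq1, hq2⟩ := (denseRange_rat d).mem_nhds this
  refine ⟨_, hq1, ?_, ?_⟩
  · simp only [F, Set.mem_setOf_eq] at hq2 ⊢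
    have e : ∀ (c : ℝ) (y v : Fin d → ℝ), dotProd α (c • y + v) = c * dotProd α y + dotProd α v := by
      intro c y v
      simp only [dotProd, Pi.add_apply, Pi.smul_apply, smul_eq_mul, mul_add,
        Finset.sum_add_distrib, Finset.mul_sum]
      congr 1
      exact Finset.sum_congr rfl fun i _ => by ring
    rw [e, div_mul_cancel₀ _ hq2, hβ]; ring
  · exact rat_mul_good _ q w

lemma all_dense {d : ℕ} (x : Fin d → ℝ) : x ∈ closure (goodPts d) := by
  rw [mem_closure_iff_nhds]
  intro N hN
  obtain ⟨q, hq⟩ := (denseRange_rat d).mem_nhds hN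
  refine ⟨_, hq, ?_⟩
  simpa using rat_mul_good 1 q 0

/-- dot product as a linear map -/
def dotL {d : ℕ} (a : Fin d → ℝ) : (Fin d → ℝ) →ₗ[ℝ] ℝ where
  toFun := dotProd a
  map_add' x y := by simp [dotProd, mul_add, Finset.sum_add_distrib]
  map_smul' c x := by
    simp only [dotProd, Pi.smul_apply, smul_eq_mul, Finset.mul_sum, RingHom.id_apply]
    exact Finset.sum_congr rfl fun i _ => by ring

lemma dotL_apply {d : ℕ} (a x : Fin d → ℝ) : dotL a x = dotProd a x := rfl

lemma sub_closure {d : ℕ} (P : Set (Fin d → ℝ)) (hP : IsSemiRationalPolytope P)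
    (hPdim : Module.finrank ℝ (affineSpan ℝ P).direction = d ∨
             Module.finrank ℝ (affineSpan ℝ P).direction + 1 = d) :
    P ⊆ closure (P ∩ goodPts d) := by
  obtain ⟨⟨V, hV, hPV⟩, n, a, b, hPab⟩ := hP
  have hconv : Convex ℝ P := hPV ▸ convex_convexHull ℝ _
  have hne : P.Nonempty := by rw [hPV]; exact (Finset.coe_nonempty.2 hV).convexHull
  clear hPV
  let ℓ : Fin n → (Fin d → ℝ) →ₗ[ℝ] ℝ := fun i => dotL (fun j => (a i j : ℝ))
  have hmem : ∀ x, x ∈ P ↔ ∀ i, ℓ i x ≤ b i := by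
    intro x; rw [hPab]; simp [ℓ, dotL_apply]
  have hℓc : ∀ i, Continuous (ℓ i) := fun i => dotProd_cont _
  clear hPab
  let I : Set (Fin n) := {i | ∃ x ∈ P, ℓ i x < b i}
  let U : Set (Fin d → ℝ) := {y | ∀ i ∈ I, ℓ i y < b i}
  have hUo : IsOpen U := by
    have : U = ⋂ i ∈ I, {y | ℓ i y < b i} := by ext; simp [U]
    rw [this]
    exact I.toFinite.isOpen_biInter fun i _ => isOpen_lt (hℓc i) continuous_const
  -- a point in `P ∩ U`
  have hmix : ∀ p ∈ P, ∀ q ∈ P, ∀ t : ℝ, 0 < t → t < 1 → (1 - t) • p + t • q ∈ P :=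
    fun p hp q hq t h0 h1 => hconv hp hq (by linarith) h0.le (by ring)
  obtain ⟨x0, hx0, hx0U⟩ : ∃ x ∈ P, x ∈ U := by
    have : ∀ J : Finset (Fin n), ∃ x ∈ P, ∀ i ∈ J, i ∈ I → ℓ i x < b i := by
      intro J
      induction J using Finset.induction_on with
      | empty => obtain ⟨x, hx⟩ := hne; exact ⟨x, hx, by simp⟩
      | insert j J hj ih =>
        obtain ⟨x, hx, hxJ⟩ := ih
        by_cases hjI : j ∈ I
        · obtain ⟨y, hy, hyj⟩ := hjI
          refine ⟨(1 - 1/2 : ℝ) • x + (1/2 : ℝ) • y, hmix x hx y hy _ (by norm_num) (by norm_num), ?_⟩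
          intro i hi hiI
          have hxi := (hmem x).1 hx i
          have hyi := (hmem y).1 hy i
          simp only [map_add, map_smul, smul_eq_mul]
          rcases Finset.mem_insert.1 hi with rfl | hi
          · linarith
          · have := hxJ i hi hiI; linarith
        · refine ⟨x, hx, fun i hi hiI => ?_⟩
          rcases Finset.mem_insert.1 hi with rfl | hi
          · exact absurd hiI hjI
          · exact hxJ i hi hiI
    obtain ⟨x, hx, hxU⟩ := this Finset.univ
    exact ⟨x, hx, fun i hi => hxU i (Finset.mem_univ i) hi⟩
  have hnI : ∀ i, i ∉ I → ∀ x ∈ P, ℓ i x = b i := by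
    intro i hi x hx
    refine le_antisymm ((hmem x).1 hx i) (not_lt.1 fun hlt => hi ⟨x, hx, hlt⟩)
  have hdir : ∀ i, i ∉ I → (affineSpan ℝ P).direction ≤ LinearMap.ker (ℓ i) := by
    intro i hi
    rw [direction_affineSpan, vectorSpan_def, Submodule.span_le]
    rintro _ ⟨x, hx, y, hy, rfl⟩
    simp [hnI i hi x hx, hnI i hi y hy]
  have hUP : ∀ y, y - x0 ∈ (affineSpan ℝ P).direction → y ∈ U → y ∈ P := by
    intro y hy hyU
    rw [hmem]
    intro i
    by_cases hi : i ∈ I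
    · exact (hyU i hi).le
    · have := hdir i hi hy
      rw [LinearMap.mem_ker, map_sub, hnI i hi x0 hx0] at this
      linarith
  -- density of `P ∩ U` in `P`
  have hPU : P ⊆ closure (P ∩ U) := by
    intro p hp
    have hc : Continuous (fun t : ℝ => (1 - t) • p + t • x0) := by fun_prop
    have h0 : (fun t : ℝ => (1 - t) • p + t • x0) 0 = p := by simp
    rw [← h0]
    have : (0 : ℝ) ∈ closure (Set.Ioo (0 : ℝ) 1) := by
      rw [closure_Ioo (by norm_num)]; simp
    refine map_mem_closure (f := fun t : ℝ => (1 - t) • p + t • x0) hc this ?_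
    intro t ht
    refine ⟨hmix p hp x0 hx0 t ht.1 ht.2, fun i hi => ?_⟩
    have h1 := (hmem p).1 hp i
    have h2 := hx0U i hi
    simp only [map_add, map_smul, smul_eq_mul]
    nlinarith [ht.1, ht.2]
  refine hPU.trans (closure_minimal ?_ isClosed_closure)
  rintro p ⟨hp, hpU⟩
  by_cases hex : ∃ i, i ∉ I ∧ a i ≠ 0
  · obtain ⟨i, hi, hai⟩ := hex
    have hℓ0 : ℓ i ≠ 0 := by
      intro h0
      apply hai
      ext j
      have : ℓ i (Pi.single j 1) = 0 := by rw [h0]; rfl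
      have e : ℓ i (Pi.single j 1) = a i j := by
        simp [ℓ, dotL_apply, dotProd, Pi.single_apply]
      rw [e] at this
      exact_mod_cast this
    have hrk := LinearMap.finrank_range_add_finrank_ker (ℓ i)
    rw [LinearMap.range_eq_top.2 (LinearMap.surjective hℓ0)] at hrk
    simp only [finrank_top, Module.finrank_self, Module.finrank_fin_fun] at hrk
    have hle := Submodule.finrank_mono (hdir i hi)
    have heq : (affineSpan ℝ P).direction = LinearMap.ker (ℓ i) :=
      Submodule.eq_of_le_of_finrank_le (hdir i hi) (by omega)
    have hd := hyper_dense (a i) hai (b i) p (hnI i hi p hp)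
    rw [mem_closure_iff_nhds] at hd ⊢
    intro N hN
    obtain ⟨y, ⟨hyN, hyU⟩, hy1, hy2⟩ := hd _ (Filter.inter_mem hN (hUo.mem_nhds hpU))
    refine ⟨y, hyN, hUP y ?_ hyU, hy2⟩
    rw [heq, LinearMap.mem_ker, map_sub, hnI i hi x0 hx0]
    have : ℓ i y = b i := hy1
    rw [this, sub_self]
  · push Not at hex
    have hUP' : U ⊆ P := by
      intro y hyU
      rw [hmem]
      intro i
      by_cases hi : i ∈ I
      · exact (hyU i hi).le
      · have h0 := hex i hi
        have e : ∀ y, ℓ i y = 0 := by intro y; simp [ℓ, dotL_apply, dotProd, h0]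
        have := (hmem x0).1 hx0 i
        rw [e] at this ⊢; exact this
    have hd := all_dense p
    rw [mem_closure_iff_nhds] at hd ⊢
    intro N hN
    obtain ⟨y, ⟨hyN, hyU⟩, hy⟩ := hd _ (Filter.inter_mem hN (hUo.mem_nhds hpU))
    exact ⟨y, hyN, hUP' hyU, hy⟩

lemma poly_compact {d : ℕ} (P : Set (Fin d → ℝ)) (hP : IsSemiRationalPolytope P) :
    IsCompact P := by
  obtain ⟨⟨V, hV, hPV⟩, -⟩ := hP
  rw [hPV]
  exact V.finite_toSet.isCompact_convexHull ℝ

lemma poly_bdd {d : ℕ} (P : Set (Fin d → ℝ)) (hP : IsSemiRationalPolytope P) :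
    ∃ K : ℝ, ∀ x ∈ P, ∀ i, |x i| ≤ K := by
  obtain ⟨K, hK⟩ := (poly_compact P hP).isBounded.exists_norm_le
  exact ⟨K, fun x hx i => (norm_le_pi_norm x i).trans (hK x hx)⟩

lemma sub_main {d : ℕ} (P Q : Set (Fin d → ℝ))
    (hP : IsSemiRationalPolytope P) (hQ : IsSemiRationalPolytope Q)
    (hPdim : Module.finrank ℝ (affineSpan ℝ P).direction = d ∨
             Module.finrank ℝ (affineSpan ℝ P).direction + 1 = d)
    (h : ∀ (w : Fin d → ℤ) (s : ℝ), 0 < s →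
      ehrhart (translateSet P (fun i => (w i : ℝ))) s =
      ehrhart (translateSet Q (fun i => (w i : ℝ))) s) :
    P ⊆ Q := by
  obtain ⟨K1, h1⟩ := poly_bdd P hP
  obtain ⟨K2, h2⟩ := poly_bdd Q hQ
  refine (sub_closure P hP hPdim).trans (closure_minimal ?_ (poly_compact Q hQ).isClosed)
  rintro x ⟨hx, δ, z, w, rfl⟩
  exact agree_aux P Q (max K1 K2) (fun x hx i => (h1 x hx i).trans (le_max_left _ _))
    (fun x hx i => (h2 x hx i).trans (le_max_right _ _)) h δ z w hx

/-- two semi-rational polytopes of codimension 0 or 1 with the same real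
Ehrhart functions on all integer translates are equal. -/
theorem stmt3 {d : ℕ} (P Q : Set (Fin d → ℝ))
    (hP : IsSemiRationalPolytope P) (hQ : IsSemiRationalPolytope Q)
    (hPdim : Module.finrank ℝ (affineSpan ℝ P).direction = d ∨
             Module.finrank ℝ (affineSpan ℝ P).direction + 1 = d)
    (hQdim : Module.finrank ℝ (affineSpan ℝ Q).direction = d ∨
             Module.finrank ℝ (affineSpan ℝ Q).direction + 1 = d)
    (h : ∀ (w : Fin d → ℤ) (s : ℝ), 0 < s →
      ehrhart (translateSet P (fun i => (w i : ℝ))) s =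
      ehrhart (translateSet Q (fun i => (w i : ℝ))) s) :
    P = Q := by
  exact Set.Subset.antisymm (sub_main P Q hP hQ hPdim h)
    (sub_main Q P hQ hP hQdim fun w s hs => (h w s hs).symm)
end

section
/- Let P and Q be polytopes in ℝ^d such that L_P(s) = L_Q(s) for every real s > 0. Then L_{ppyr(P)}(s) = L_{ppyr(Q)}(s) for every real s > 0, where ppyr(P) = conv(P ∪ {0}). -/
open Set MeasureTheory Pointwise

open Filter Topology

/-- Lattice points entering the dilates of `P` exactly at time `t`. -/
def entering {d : ℕ} (P : Set (Fin d → ℝ)) (t : ℝ) : Set (Fin d → ℝ) :=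
  {x | x ∈ latticePts d ∧ x ∈ t • P ∧ ∀ u, 0 < u → u < t → x ∉ u • P}

lemma lattice_fin {d : ℕ} {K : Set (Fin d → ℝ)} (hK : Bornology.IsBounded K) :
    (K ∩ latticePts d).Finite := by
  obtain ⟨R, hR⟩ := hK.exists_norm_le
  refine Set.Finite.subset (Set.Finite.pi' (t := fun _ : Fin d =>
    (fun m : ℤ => (m : ℝ)) '' Set.Icc (-⌈R⌉) ⌈R⌉) (fun i => (Set.finite_Icc _ _).image _)) ?_
  rintro x ⟨hx, hl⟩ i
  obtain ⟨m, hm⟩ := hl i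
  have h1 : |x i| ≤ R := (norm_le_pi_norm x i).trans (hR x hx)
  rw [hm, abs_le] at h1
  have h2 := Int.le_ceil R
  refine ⟨m, ⟨?_, ?_⟩, hm.symm⟩
  · have : ((-⌈R⌉ : ℤ) : ℝ) ≤ m := by push_cast; linarith
    exact_mod_cast this
  · have : (m : ℝ) ≤ (⌈R⌉ : ℤ) := by linarith
    exact_mod_cast this

lemma poly_props {d : ℕ} {P : Set (Fin d → ℝ)} (hP : IsPolytope P) :
    P.Nonempty ∧ Convex ℝ P ∧ IsCompact P := by
  obtain ⟨V, hV, rfl⟩ := hP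
  exact ⟨by simpa using hV, convex_convexHull _ _, V.finite_toSet.isCompact_convexHull ℝ⟩

lemma mem_sm {d : ℕ} {P : Set (Fin d → ℝ)} {t : ℝ} (ht : 0 < t) (x : Fin d → ℝ) :
    x ∈ t • P ↔ t⁻¹ • x ∈ P := Set.mem_smul_set_iff_inv_smul_mem₀ ht.ne' P x

lemma mem_between {d : ℕ} {P : Set (Fin d → ℝ)} (hc : Convex ℝ P) {a b u : ℝ} (ha : 0 < a)
    (hau : a ≤ u) (hub : u ≤ b) {x : Fin d → ℝ} (h1 : x ∈ a • P) (h2 : x ∈ b • P) :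
    x ∈ u • P := by
  have hu : 0 < u := by linarith
  have hb : 0 < b := by linarith
  rw [mem_sm ha] at h1
  rw [mem_sm hb] at h2
  rw [mem_sm hu]
  have hconv : Convex ℝ ((fun r : ℝ => r • x) ⁻¹' P) :=
    hc.is_linear_preimage (IsLinearMap.mk (fun a b => add_smul a b x)
      (fun a b => by simp [mul_smul]))
  exact hconv.ordConnected.out (x := b⁻¹) (y := a⁻¹) h2 h1
    ⟨by gcongr, by gcongr⟩

lemma pointwise_ev {d : ℕ} {P : Set (Fin d → ℝ)} (hc : Convex ℝ P) (hcl : IsClosed P)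
    {t : ℝ} (ht : 0 < t) {x : Fin d → ℝ} (hx : x ∈ latticePts d) :
    ∀ᶠ u in 𝓝[<] t, (x ∈ t • P ↔ x ∈ u • P ∨ x ∈ entering P t) ∧
      ¬ (x ∈ u • P ∧ x ∈ entering P t) := by
  have hpos : ∀ᶠ u in 𝓝[<] t, 0 < u := nhdsWithin_le_nhds (lt_mem_nhds ht)
  have hlt : ∀ᶠ u in 𝓝[<] t, u < t := self_mem_nhdsWithin
  by_cases h1 : x ∈ t • P
  · by_cases h2 : x ∈ entering P t
    · filter_upwards [hpos, hlt] with u hu hut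
      have := h2.2.2 u hu hut
      tauto
    · have : ∃ a, 0 < a ∧ a < t ∧ x ∈ a • P := by
        by_contra hcon
        push Not at hcon
        exact h2 ⟨hx, h1, hcon⟩
      obtain ⟨a, ha, hat, hxa⟩ := this
      have h3 : ∀ᶠ u in 𝓝[<] t, a < u := nhdsWithin_le_nhds (lt_mem_nhds hat)
      filter_upwards [h3, hlt] with u hu hut
      have := mem_between hc ha hu.le hut.le hxa h1
      tauto
  · have h2 : x ∉ entering P t := fun h => h1 h.2.1
    have hct : ContinuousAt (fun u : ℝ => u⁻¹ • x) t :=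
      (continuousAt_inv₀ ht.ne').smul continuousAt_const
    have h3 : ∀ᶠ u in 𝓝[<] t, u⁻¹ • x ∈ Pᶜ := by
      apply nhdsWithin_le_nhds
      apply hct.eventually_mem
      apply hcl.isOpen_compl.mem_nhds
      rwa [mem_sm ht] at h1
    filter_upwards [h3, hpos] with u hu hu0
    have : x ∉ u • P := by rw [mem_sm hu0]; exact hu
    tauto

lemma jump {d : ℕ} {P : Set (Fin d → ℝ)} (hc : Convex ℝ P) (hk : IsCompact P)
    {t : ℝ} (ht : 0 < t) :
    ∀ᶠ u in 𝓝[<] t, ehrhart P t = ehrhart P u + (entering P t).ncard := by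
  obtain ⟨R, hR⟩ := hk.isBounded.exists_norm_le
  have hF := lattice_fin (d := d) (K := Metric.closedBall 0 (t * R)) Metric.isBounded_closedBall
  have hev := (Filter.eventually_all_finite hF).2
    (fun x hx => pointwise_ev hc hk.isClosed ht hx.2)
  have hpos : ∀ᶠ u in 𝓝[<] t, 0 < u := nhdsWithin_le_nhds (lt_mem_nhds ht)
  have hlt : ∀ᶠ u in 𝓝[<] t, u < t := self_mem_nhdsWithin
  filter_upwards [hev, hpos, hlt] with u hu hu0 hut
  have hsub : ∀ v, 0 < v → v ≤ t → ∀ x ∈ v • P, x ∈ Metric.closedBall (0 : Fin d → ℝ) (t * R) := by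
    rintro v hv hvt _ ⟨p, hp, rfl⟩
    have h1 := hR p hp
    have h0 := norm_nonneg p
    simp only [mem_closedBall_zero_iff, norm_smul, Real.norm_eq_abs, abs_of_pos hv]
    exact mul_le_mul hvt h1 h0 ht.le
  have hfin : ∀ v, 0 < v → v ≤ t → (v • P ∩ latticePts d).Finite := fun v hv hvt =>
    hF.subset (fun x hx => ⟨hsub v hv hvt x hx.1, hx.2⟩)
  have hE : (entering P t).Finite := (hfin t ht le_rfl).subset (fun x hx => ⟨hx.2.1, hx.1⟩)
  unfold ehrhart
  rw [← Set.ncard_union_eq _ (hfin u hu0 hut.le) hE]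
  · congr 1
    ext x
    constructor
    · rintro ⟨h1, h2⟩
      rcases (hu x ⟨hsub t ht le_rfl x h1, h2⟩).1.1 h1 with h | h
      · exact Or.inl ⟨h, h2⟩
      · exact Or.inr h
    · rintro (⟨h1, h2⟩ | h)
      · exact ⟨(hu x ⟨hsub u hu0 hut.le x h1, h2⟩).1.2 (Or.inl h1), h2⟩
      · exact ⟨h.2.1, h.1⟩
  · rw [Set.disjoint_left]
    rintro x ⟨h1, h2⟩ h
    exact (hu x ⟨hsub u hu0 hut.le x h1, h2⟩).2 ⟨h1, h⟩

lemma entering_fin {d : ℕ} {P : Set (Fin d → ℝ)} (hk : IsCompact P) (t : ℝ) :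
    (entering P t).Finite :=
  (lattice_fin (hk.smul t).isBounded).subset (fun _ hx => ⟨hx.2.1, hx.1⟩)

lemma mem_ppyr {d : ℕ} {P : Set (Fin d → ℝ)} (hn : P.Nonempty) (hc : Convex ℝ P)
    {s : ℝ} (hs : 0 < s) {x : Fin d → ℝ} (hx : x ≠ 0) :
    x ∈ s • convexHull ℝ (P ∪ {0}) ↔ ∃ t, 0 < t ∧ t ≤ s ∧ x ∈ t • P := by
  rw [Set.union_singleton, convexHull_insert hn, hc.convexHull_eq, convexJoin_singleton_left]
  constructor
  · rintro ⟨y, hy, rfl⟩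
    simp only [Set.mem_iUnion] at hy
    obtain ⟨p, hp, a, b, ha, hb, hab, rfl⟩ := hy
    rcases hb.eq_or_lt with rfl | hb
    · simp at hx
    · refine ⟨s * b, by positivity, by nlinarith, p, hp, by simp [mul_smul]⟩
  · rintro ⟨t, ht, hts, p, hp, rfl⟩
    refine ⟨(t / s) • p, ?_, ?_⟩
    · simp only [Set.mem_iUnion]
      refine ⟨p, hp, 1 - t / s, t / s, ?_, by positivity, by ring, by simp⟩
      rw [sub_nonneg, div_le_one hs]; exact hts
    · simp only [smul_smul]
      congr 1
      field_simp

lemma exists_first {d : ℕ} {P : Set (Fin d → ℝ)} (hk : IsCompact P)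
    {t : ℝ} (ht : 0 < t) {x : Fin d → ℝ} (hx : x ≠ 0) (hl : x ∈ latticePts d) (h : x ∈ t • P) :
    ∃ a, 0 < a ∧ a ≤ t ∧ x ∈ entering P a := by
  obtain ⟨R, hR⟩ := hk.isBounded.exists_norm_le
  have hx0 : 0 < ‖x‖ := norm_pos_iff.2 hx
  have hbd : ∀ r : ℝ, 0 ≤ r → r • x ∈ P → r ≤ R / ‖x‖ := by
    intro r hr hp
    have := hR _ hp
    rw [norm_smul, Real.norm_eq_abs, abs_of_nonneg hr] at this
    rwa [le_div_iff₀ hx0]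
  have hcl : IsClosed ((fun r : ℝ => r • x) ⁻¹' P) := hk.isClosed.preimage (by fun_prop)
  have hK : IsCompact (Set.Icc 0 (R / ‖x‖) ∩ (fun r : ℝ => r • x) ⁻¹' P) :=
    isCompact_Icc.inter_right hcl
  rw [mem_sm ht] at h
  have hti : 0 < t⁻¹ := inv_pos.2 ht
  have hmem : t⁻¹ ∈ Set.Icc 0 (R / ‖x‖) ∩ (fun r : ℝ => r • x) ⁻¹' P :=
    ⟨⟨hti.le, hbd _ hti.le h⟩, h⟩
  obtain ⟨r, hr, hmax⟩ := hK.exists_isGreatest ⟨_, hmem⟩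
  have hrt := hmax hmem
  have hr0 : 0 < r := hti.trans_le hrt
  refine ⟨r⁻¹, inv_pos.2 hr0, inv_le_of_inv_le₀ ht hrt, hl, ?_, ?_⟩
  · rw [mem_sm (inv_pos.2 hr0), inv_inv]; exact hr.2
  · intro u hu hur hxu
    rw [mem_sm hu] at hxu
    have hui : 0 < u⁻¹ := inv_pos.2 hu
    have h1 := hmax (a := u⁻¹) ⟨⟨hui.le, hbd _ hui.le hxu⟩, hxu⟩
    have h2 : r < u⁻¹ := (lt_inv_comm₀ hu hr0).1 hur
    linarith

lemma entering_ne {d : ℕ} {P : Set (Fin d → ℝ)} {t : ℝ} (ht : 0 < t) {x : Fin d → ℝ}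
    (h : x ∈ entering P t) : x ≠ 0 := by
  rintro rfl
  have h1 := h.2.1
  apply h.2.2 (t / 2) (by positivity) (by linarith)
  rw [mem_sm ht, smul_zero] at h1
  rw [mem_sm (by positivity), smul_zero]
  exact h1

lemma ppyr_count {d : ℕ} {P : Set (Fin d → ℝ)} (hn : P.Nonempty) (hc : Convex ℝ P)
    (hk : IsCompact P) {s : ℝ} (hs : 0 < s) :
    ehrhart (convexHull ℝ (P ∪ {0})) s =
      Nat.card (Σ t : Set.Ioc (0 : ℝ) s, entering P t) + 1 := by
  have hfin : (s • convexHull ℝ (P ∪ {0}) ∩ latticePts d).Finite := by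
    apply lattice_fin
    apply Bornology.IsBounded.smul₀
    rw [isBounded_convexHull]
    exact hk.isBounded.union Bornology.isBounded_singleton
  have h0 : (0 : Fin d → ℝ) ∈ s • convexHull ℝ (P ∪ {0}) ∩ latticePts d :=
    ⟨⟨0, subset_convexHull ℝ _ (Or.inr rfl), by simp⟩, fun i => ⟨0, by simp⟩⟩
  unfold ehrhart
  rw [← Set.ncard_sdiff_singleton_add_one h0 hfin]
  congr 1
  rw [← Nat.card_coe_set_eq]
  symm
  refine Nat.card_congr (Equiv.ofBijective (fun y => ⟨y.2.1, ⟨?_, y.2.2.1⟩, ?_⟩) ⟨?_, ?_⟩)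
  · exact (mem_ppyr hn hc hs (entering_ne y.1.2.1 y.2.2)).2
      ⟨y.1, y.1.2.1, y.1.2.2, y.2.2.2.1⟩
  · exact entering_ne y.1.2.1 y.2.2
  · rintro ⟨⟨t, ht⟩, x, hx⟩ ⟨⟨u, hu⟩, y, hy⟩ hxy
    have hxy : x = y := congrArg Subtype.val hxy
    subst hxy
    have : t = u := by
      rcases lt_trichotomy t u with h | h | h
      · exact absurd hx.2.1 (hy.2.2 t ht.1 h)
      · exact h
      · exact absurd hy.2.1 (hx.2.2 u hu.1 h)
    subst this
    rfl
  · rintro ⟨x, ⟨h1, h2⟩, h3⟩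
    have h3 : x ≠ 0 := h3
    obtain ⟨t, ht, hts, hxt⟩ := (mem_ppyr hn hc hs h3).1 h1
    obtain ⟨a, ha, hat, hxa⟩ := exists_first hk ht h3 h2 hxt
    exact ⟨⟨⟨a, ha, hat.trans hts⟩, x, hxa⟩, rfl⟩

/-- if two polytopes have the same real Ehrhart function, then so do
their pseudopyramids `ppyr(P) = conv(P ∪ {0})`. -/
theorem stmt4 {d : ℕ} (P Q : Set (Fin d → ℝ)) (hP : IsPolytope P) (hQ : IsPolytope Q)
    (h : ∀ s : ℝ, 0 < s → ehrhart P s = ehrhart Q s) :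
    ∀ s : ℝ, 0 < s →
      ehrhart (convexHull ℝ (P ∪ {0})) s = ehrhart (convexHull ℝ (Q ∪ {0})) s := by
  obtain ⟨hPn, hPc, hPk⟩ := poly_props hP
  obtain ⟨hQn, hQc, hQk⟩ := poly_props hQ
  intro s hs
  rw [ppyr_count hPn hPc hPk hs, ppyr_count hQn hQc hQk hs]
  congr 1
  have key : ∀ t : Set.Ioc (0 : ℝ) s, Nonempty (entering P t ≃ entering Q t) := by
    rintro ⟨t, ht, -⟩
    have hpos : ∀ᶠ u in 𝓝[<] t, 0 < u := nhdsWithin_le_nhds (lt_mem_nhds ht)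
    obtain ⟨u, h1, h2, hu⟩ := ((jump hPc hPk ht).and ((jump hQc hQk ht).and hpos)).exists
    have h3 := h t ht
    have h4 := h u hu
    have h5 : (entering P t).ncard = (entering Q t).ncard := by omega
    have := (entering_fin hPk t).to_subtype
    have := (entering_fin hQk t).to_subtype
    rw [← Nat.card_coe_set_eq, ← Nat.card_coe_set_eq] at h5
    exact (Finite.card_eq).1 h5
  exact Nat.card_congr (Equiv.sigmaCongrRight fun t => (key t).some)
end

section
/- Let P = ⋂_{i=1}^n {x ∈ ℝ^d : ⟨a_i, x⟩ ≤ b_i} be a full-dimensional polytope (compact with nonempty interior), with facets-candidates F_i = P ∩ {x : ⟨a_i, x⟩ = b_i}, and call F_i a back facet when b_i < 0. Then ppyr(P) = conv(P ∪ {0}) equals the union of P together with the sets conv(F_i ∪ {0}) over all i with b_i < 0, and this union is interior-disjoint: the interiors of P and of the sets conv(F_i ∪ {0}) (i with b_i < 0) are pairwise disjoint. -/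
open Set MeasureTheory Pointwise

theorem dp_smul {d : ℕ} (c x : Fin d → ℝ) (t : ℝ) : dotProd c (t • x) = t * dotProd c x := by
  simp only [dotProd, Finset.mul_sum, Pi.smul_apply, smul_eq_mul]
  exact Finset.sum_congr rfl fun i _ => by ring

theorem dp_add {d : ℕ} (c x y : Fin d → ℝ) : dotProd c (x + y) = dotProd c x + dotProd c y := by
  simp only [dotProd, ← Finset.sum_add_distrib, Pi.add_apply]
  exact Finset.sum_congr rfl fun i _ => by ring

theorem dp_zero {d : ℕ} (c : Fin d → ℝ) : dotProd c 0 = 0 := by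
  simp [dotProd]

theorem dp_const {d : ℕ} (c : Fin d → ℝ) (k : ℝ) (U : Set (Fin d → ℝ)) (hU : IsOpen U)
    (x : Fin d → ℝ) (hx : x ∈ U) (h : ∀ y ∈ U, dotProd c y = k) : c = 0 := by
  have hc : Continuous (fun e : ℝ => x + e • c) := by fun_prop
  have hV : IsOpen ((fun e : ℝ => x + e • c) ⁻¹' U) := hU.preimage hc
  obtain ⟨r, hr, hb⟩ := Metric.isOpen_iff.1 hV 0 (by simpa using hx)
  have h1 : x + (r / 2) • c ∈ U := hb (by
    simp only [Metric.mem_ball, dist_zero_right, Real.norm_eq_abs]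
    rw [abs_of_pos (by linarith)]; linarith)
  have h2 := h _ h1
  rw [dp_add, dp_smul, h x hx] at h2
  have h3 : dotProd c c = 0 := by
    have : r / 2 * dotProd c c = 0 := by linarith
    rcases mul_eq_zero.1 this with h | h
    · linarith
    · exact h
  unfold dotProd at h3
  rw [Finset.sum_eq_zero_iff_of_nonneg (fun i _ => mul_self_nonneg _)] at h3
  funext i
  exact mul_self_eq_zero.1 (h3 i (Finset.mem_univ i))

theorem mem_pyr {d : ℕ} (K : Set (Fin d → ℝ)) (hK : Convex ℝ K) (y : Fin d → ℝ)
    (hy : y ∈ convexHull ℝ (K ∪ {0})) :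
    y = 0 ∨ ∃ t : ℝ, 0 ≤ t ∧ t ≤ 1 ∧ ∃ f ∈ K, y = t • f := by
  rcases K.eq_empty_or_nonempty with rfl | hne
  · left; simpa using hy
  · right
    rw [convexHull_union hne (singleton_nonempty 0), hK.convexHull_eq, convexHull_singleton] at hy
    simp only [mem_convexJoin, mem_singleton_iff, exists_eq_left] at hy
    obtain ⟨f, hf, p, q, hp, hq, hpq, rfl⟩ := hy
    exact ⟨p, hp, by linarith, f, hf, by simp⟩

theorem pyr_mem {d : ℕ} (K : Set (Fin d → ℝ)) (t : ℝ) (h0 : 0 ≤ t) (h1 : t ≤ 1)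
    (f : Fin d → ℝ) (hf : f ∈ K) : t • f ∈ convexHull ℝ (K ∪ {0}) := by
  have := (convex_convexHull ℝ (K ∪ {0})) (subset_convexHull ℝ _ (Or.inl hf))
    (subset_convexHull ℝ (K ∪ {0}) (Or.inr rfl)) h0 (sub_nonneg.2 h1) (by ring)
  simpa using this

/-- the pseudopyramid of a full-dimensional polytope is the
interior-disjoint union of the polytope and the pseudopyramids of its back facets. -/
theorem stmt5 {d n : ℕ} (a : Fin n → Fin d → ℝ) (b : Fin n → ℝ)
    (P : Set (Fin d → ℝ))
    (hPdef : P = ⋂ i, {x : Fin d → ℝ | dotProd (a i) x ≤ b i})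
    (hcomp : IsCompact P) (hint : (interior P).Nonempty)
    (F : Fin n → Set (Fin d → ℝ))
    (hF : ∀ i, F i = P ∩ {x : Fin d → ℝ | dotProd (a i) x = b i}) :
    (convexHull ℝ (P ∪ {0}) =
      P ∪ ⋃ i ∈ {i : Fin n | b i < 0}, convexHull ℝ (F i ∪ {0})) ∧
    (insert (interior P)
      ((fun i => interior (convexHull ℝ (F i ∪ {0}))) '' {i : Fin n | b i < 0})).Pairwise
      (fun S T => Disjoint S T) := by
  have hmem : ∀ x, x ∈ P ↔ ∀ i, dotProd (a i) x ≤ b i := by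
    intro x; rw [hPdef]; simp
  have hFm : ∀ i x, x ∈ F i ↔ x ∈ P ∧ dotProd (a i) x = b i := by
    intro i x; rw [hF]; rfl
  have hPc : Convex ℝ P := by
    intro x hx y hy s t hs ht hst
    rw [hmem] at hx hy ⊢
    intro i
    rw [dp_add, dp_smul, dp_smul]
    have e : b i = s * b i + t * b i := by rw [← add_mul, hst, one_mul]
    rw [e]
    exact add_le_add (mul_le_mul_of_nonneg_left (hx i) hs) (mul_le_mul_of_nonneg_left (hy i) ht)
  have hFc : ∀ i, Convex ℝ (F i) := by
    intro i x hx y hy s t hs ht hst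
    rw [hFm] at hx hy ⊢
    refine ⟨hPc hx.1 hy.1 hs ht hst, ?_⟩
    rw [dp_add, dp_smul, dp_smul, hx.2, hy.2, ← add_mul, hst, one_mul]
  have hPS : ∀ i, b i < 0 → Disjoint (interior P) (interior (convexHull ℝ (F i ∪ {0}))) := by
    intro i hi
    rw [Set.disjoint_left]
    intro x hx hx'
    have key := dp_const (a i) (b i) (interior P ∩ interior (convexHull ℝ (F i ∪ {0})))
      (isOpen_interior.inter isOpen_interior) x ⟨hx, hx'⟩ (by
        rintro y ⟨h1, h2⟩
        have h1 := (hmem y).1 (interior_subset h1) i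
        rcases mem_pyr _ (hFc i) y (interior_subset h2) with rfl | ⟨t, h0, ht, f, hf, rfl⟩
        · rw [dp_zero] at h1; linarith
        · rw [dp_smul, ((hFm i f).1 hf).2] at h1 ⊢
          nlinarith)
    have h1 := (hmem x).1 (interior_subset hx) i
    rw [key] at h1
    simp [dotProd] at h1
    linarith
  refine ⟨?_, ?_⟩
  · apply Set.Subset.antisymm
    · intro y hy
      by_cases hyP : y ∈ P
      · exact Or.inl hyP
      right
      have hI : ∃ i, b i < 0 := by
        by_contra! hcon
        have h0 : (0 : Fin d → ℝ) ∈ P := (hmem 0).2 fun i => by rw [dp_zero]; exact hcon i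
        apply hyP
        rwa [union_eq_self_of_subset_right (singleton_subset_iff.2 h0), hPc.convexHull_eq] at hy
      simp only [mem_setOf_eq, mem_iUnion, exists_prop]
      rcases mem_pyr _ hPc y hy with rfl | ⟨t, h0, ht, p, hp, rfl⟩
      · obtain ⟨i, hi⟩ := hI
        exact ⟨i, hi, subset_convexHull ℝ _ (Or.inr rfl)⟩
      have hp' := (hmem p).1 hp
      obtain ⟨i, hi, hmax⟩ := Finset.exists_max_image (Finset.univ.filter fun i => b i < 0)
        (fun i => b i / dotProd (a i) p) (by
          obtain ⟨i, hi⟩ := hI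
          exact ⟨i, by simpa using hi⟩)
      simp only [Finset.mem_filter, Finset.mem_univ, true_and] at hi hmax
      have hci : dotProd (a i) p < 0 := (hp' i).trans_lt hi
      set r := b i / dotProd (a i) p with hr
      have hr0 : 0 < r := div_pos_of_neg_of_neg hi hci
      have hr1 : r ≤ 1 := (div_le_one_of_neg hci).2 (hp' i)
      have hs : ∀ s, r ≤ s → s ≤ 1 → s • p ∈ P := by
        intro s hrs hs1
        rw [hmem]
        intro j
        rw [dp_smul]
        have hj := hp' j
        rcases lt_or_ge (b j) 0 with hbj | hbj
        · have := (hmax j hbj).trans hrs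
          rwa [div_le_iff_of_neg (hj.trans_lt hbj)] at this
        · have hs0 : 0 ≤ s := hr0.le.trans hrs
          nlinarith [mul_le_mul_of_nonneg_left hj hs0]
      refine ⟨i, hi, ?_⟩
      have htr : t < r := by
        by_contra! hcon
        exact hyP (hs t hcon ht)
      have hrp : r • p ∈ F i := by
        rw [hFm]
        refine ⟨hs r le_rfl hr1, ?_⟩
        rw [dp_smul, hr, div_mul_cancel₀ _ hci.ne]
      have := pyr_mem (F i) (t / r) (div_nonneg h0 hr0.le) ((div_le_one hr0).2 htr.le) _ hrp
      rwa [smul_smul, div_mul_cancel₀ _ hr0.ne'] at this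
    · apply union_subset
      · exact subset_union_left.trans (subset_convexHull ℝ _)
      · refine iUnion₂_subset fun i _ => convexHull_mono (union_subset_union_left _ ?_)
        intro x hx
        exact ((hFm i x).1 hx).1
  · rintro S (rfl | ⟨i, hi, rfl⟩) T (rfl | ⟨j, hj, rfl⟩) hST
    · exact absurd rfl hST
    · exact hPS j hj
    · exact (hPS i hi).symm
    · simp only [mem_setOf_eq] at hi hj
      rw [Set.disjoint_left]
      intro x hx hx'
      apply hST
      have lin : ∀ y, dotProd (b j • a i - b i • a j) y
          = b j * dotProd (a i) y - b i * dotProd (a j) y := by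
        intro y
        simp only [dotProd, Finset.mul_sum, ← Finset.sum_sub_distrib, Pi.sub_apply,
          Pi.smul_apply, smul_eq_mul]
        exact Finset.sum_congr rfl fun k _ => by ring
      have key := dp_const (b j • a i - b i • a j) 0 _
        (isOpen_interior.inter isOpen_interior) x ⟨hx, hx'⟩ (by
          rintro y ⟨h1, h2⟩
          rw [lin]
          rcases mem_pyr _ (hFc i) y (interior_subset h1) with rfl | ⟨t, t0, t1, f, hf, hyf⟩
          · simp [dp_zero]
          rcases mem_pyr _ (hFc j) y (interior_subset h2) with rfl | ⟨s, s0, s1, g, hg, hyg⟩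
          · simp [dp_zero]
          rw [hFm] at hf hg
          have e1 : dotProd (a i) y = t * b i := by rw [hyf, dp_smul, hf.2]
          have e2 : dotProd (a j) y = s * b j := by rw [hyg, dp_smul, hg.2]
          have e3 : dotProd (a i) y ≤ s * b i := by
            rw [hyg, dp_smul]
            exact mul_le_mul_of_nonneg_left ((hmem g).1 hg.1 i) s0
          have e4 : dotProd (a j) y ≤ t * b j := by
            rw [hyf, dp_smul]
            exact mul_le_mul_of_nonneg_left ((hmem f).1 hf.1 j) t0
          rw [e1] at e3
          rw [e2] at e4
          have l1 : s ≤ t := (mul_le_mul_right_of_neg hi).1 e3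
          have l2 : t ≤ s := (mul_le_mul_right_of_neg hj).1 e4
          have : t = s := le_antisymm l2 l1
          rw [e1, e2, this]; ring)
      have hFF : F i = F j := by
        ext z
        rw [hFm, hFm]
        have hz := lin z
        rw [key] at hz
        simp only [dotProd, Pi.zero_apply, zero_mul, Finset.sum_const_zero] at hz
        change 0 = b j * dotProd (a i) z - b i * dotProd (a j) z at hz
        refine and_congr_right fun _ => ⟨fun h => ?_, fun h => ?_⟩
        · rw [h] at hz
          exact mul_left_cancel₀ hi.ne (by linarith)
        · rw [h] at hz
          exact mul_left_cancel₀ hj.ne (by linarith)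
      simp only [hFF]
end

section
/- Let P ⊆ ℝ^d be a full-dimensional polytope which does not contain the origin, let v be any point of P, and let λ > μ ≥ 0 be real numbers. Then the set {s > 0 : L_{P+λv}(s) ≠ L_{P+μv}(s)} is infinite. -/
open Set MeasureTheory Pointwise

open Filter Topology

namespace EhrAux

noncomputable def entT {d : ℕ} (Q : Set (Fin d → ℝ)) (x : Fin d → ℝ) : ℝ := sInf {s : ℝ | 0 < s ∧ x ∈ s • Q}

lemma lattice_eq (d : ℕ) :
    latticePts d = (Submodule.span ℤ (Set.range (Pi.basisFun ℝ (Fin d))) : Set (Fin d → ℝ)) := by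
  ext x
  simp only [SetLike.mem_coe, Module.Basis.mem_span_iff_repr_mem, latticePts, Set.mem_ofPred_eq]
  simp [eq_comm]

lemma lattice_fin {d : ℕ} (R : ℝ) : {x ∈ latticePts d | ‖x‖ ≤ R}.Finite := by
  have := ZSpan.setFinite_inter (Pi.basisFun ℝ (Fin d)) (s := Metric.closedBall 0 R)
    Metric.isBounded_closedBall
  refine this.subset ?_
  rintro x ⟨hx, hR⟩
  rw [lattice_eq] at hx
  exact ⟨by simpa using hR, hx⟩

lemma closed_times {d : ℕ} {Q : Set (Fin d → ℝ)} (hc : IsCompact Q) (h0 : (0 : Fin d → ℝ) ∉ Q)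
    (x : Fin d → ℝ) : IsClosed {s : ℝ | 0 < s ∧ x ∈ s • Q} := by
  obtain ⟨R, hR, hQ⟩ := hc.isBounded.exists_pos_norm_le
  by_cases hx : x = 0
  · have : {s : ℝ | 0 < s ∧ x ∈ s • Q} = ∅ := by
      ext s
      simp only [Set.mem_ofPred_eq, Set.mem_empty_iff_false, iff_false, not_and]
      intro hs h
      rw [Set.mem_smul_set_iff_inv_smul_mem₀ hs.ne', hx, smul_zero] at h
      exact h0 h
    rw [this]; exact isClosed_empty
  · have hpos : 0 < ‖x‖ / R := by positivity
    have : {s : ℝ | 0 < s ∧ x ∈ s • Q} = Set.Ici (‖x‖ / R) ∩ (fun s : ℝ => s⁻¹ • x) ⁻¹' Q := by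
      ext s
      constructor
      · rintro ⟨hs, h⟩
        rw [Set.mem_smul_set_iff_inv_smul_mem₀ hs.ne'] at h
        refine ⟨?_, h⟩
        have := hQ _ h
        rw [norm_smul, norm_inv, Real.norm_eq_abs, abs_of_pos hs, inv_mul_le_iff₀ hs] at this
        exact (div_le_iff₀ hR).2 this
      · rintro ⟨h1, h2⟩
        have hs : 0 < s := hpos.trans_le h1
        exact ⟨hs, (Set.mem_smul_set_iff_inv_smul_mem₀ hs.ne' _ _).2 h2⟩
    rw [this]
    refine ContinuousOn.preimage_isClosed_of_isClosed ?_ isClosed_Ici hc.isClosed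
    refine ContinuousOn.smul (ContinuousOn.inv₀ continuousOn_id ?_) continuousOn_const
    intro s hs
    exact (hpos.trans_le hs).ne'

lemma bdd_times {d : ℕ} (Q : Set (Fin d → ℝ)) (x : Fin d → ℝ) :
    BddBelow {s : ℝ | 0 < s ∧ x ∈ s • Q} := ⟨0, fun _ h => h.1.le⟩

lemma entT_mem {d : ℕ} {Q : Set (Fin d → ℝ)} (hc : IsCompact Q) (h0 : (0 : Fin d → ℝ) ∉ Q)
    {x : Fin d → ℝ} {s : ℝ} (hs : 0 < s) (hx : x ∈ s • Q) :
    0 < entT Q x ∧ x ∈ entT Q x • Q :=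
  (closed_times hc h0 x).csInf_mem ⟨s, hs, hx⟩ (bdd_times Q x)

lemma entT_le {d : ℕ} {Q : Set (Fin d → ℝ)}
    {x : Fin d → ℝ} {s : ℝ} (hs : 0 < s) (hx : x ∈ s • Q) : entT Q x ≤ s :=
  csInf_le (bdd_times Q x) ⟨hs, hx⟩

lemma mem_between {d : ℕ} {Q : Set (Fin d → ℝ)} (hv : Convex ℝ Q) {x : Fin d → ℝ} {a b s : ℝ}
    (ha : 0 < a) (hxa : x ∈ a • Q) (hxb : x ∈ b • Q) (h1 : a ≤ s) (h2 : s ≤ b) : x ∈ s • Q := by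
  have hs : 0 < s := ha.trans_le h1
  have hb : 0 < b := hs.trans_le h2
  rw [Set.mem_smul_set_iff_inv_smul_mem₀ (by positivity)] at *
  have hc : Convex ℝ ((fun t : ℝ => t • x) ⁻¹' Q) :=
    hv.is_linear_preimage ⟨fun a b => add_smul a b x, fun a b => by simp [mul_smul]⟩
  have := hc.ordConnected.out hxb hxa
  exact this ⟨by gcongr, by gcongr⟩

lemma norm_le_of {d : ℕ} {Q : Set (Fin d → ℝ)} {R : ℝ} (hQ : ∀ q ∈ Q, ‖q‖ ≤ R)
    {x : Fin d → ℝ} {s : ℝ} (hs : 0 < s) (hx : x ∈ s • Q) : ‖x‖ ≤ s * R := by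
  obtain ⟨q, hq, rfl⟩ := hx
  simp only [norm_smul, Real.norm_eq_abs, abs_of_pos hs]
  gcongr
  exact hQ q hq

lemma pts_fin {d : ℕ} {Q : Set (Fin d → ℝ)} (hc : IsCompact Q) {s : ℝ} (hs : 0 < s) :
    (s • Q ∩ latticePts d).Finite := by
  obtain ⟨R, hR, hQ⟩ := hc.isBounded.exists_pos_norm_le
  exact (lattice_fin (s * R)).subset fun x hx => ⟨hx.2, norm_le_of hQ hs hx.1⟩

/-- lattice points entering at time `s` -/
def ent {d : ℕ} (Q : Set (Fin d → ℝ)) (s : ℝ) : Set (Fin d → ℝ) :=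
  {x | x ∈ s • Q ∩ latticePts d ∧ entT Q x = s}

lemma jump {d : ℕ} {Q : Set (Fin d → ℝ)} (hc : IsCompact Q) (h0 : (0 : Fin d → ℝ) ∉ Q)
    (hv : Convex ℝ Q) {s : ℝ} (hs : 0 < s) :
    ∀ᶠ t in 𝓝[<] s, ehrhart Q t + (ent Q s).ncard = ehrhart Q s := by
  obtain ⟨R, hR, hQ⟩ := hc.isBounded.exists_pos_norm_le
  have key : ∀ᶠ t in 𝓝[<] s, ∀ x ∈ {x ∈ latticePts d | ‖x‖ ≤ s * R},
      (x ∈ t • Q ↔ x ∈ s • Q ∧ entT Q x < s) := by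
    rw [eventually_all_finite (lattice_fin _)]
    intro x _
    have hpos : ∀ᶠ t in 𝓝[<] s, 0 < t := nhdsWithin_le_nhds (lt_mem_nhds hs)
    have hlt : ∀ᶠ t in 𝓝[<] s, t < s := self_mem_nhdsWithin
    by_cases hx : x ∈ s • Q
    · by_cases he : entT Q x < s
      · have : ∀ᶠ t in 𝓝[<] s, entT Q x < t := nhdsWithin_le_nhds (lt_mem_nhds he)
        filter_upwards [this, hlt] with t h1 h2
        have hm := entT_mem hc h0 hs hx
        simp only [hx, he, and_self, iff_true]
        exact mem_between hv hm.1 hm.2 hx h1.le h2.le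
      · filter_upwards [hpos, hlt] with t h1 h2
        simp only [hx, he, and_false, iff_false]
        intro h
        exact he ((entT_le h1 h).trans_lt h2)
    · have hn : {t : ℝ | 0 < t ∧ x ∈ t • Q}ᶜ ∈ 𝓝 s :=
        (closed_times hc h0 x).isOpen_compl.mem_nhds (fun h => hx h.2)
      filter_upwards [hpos, nhdsWithin_le_nhds hn] with t h1 h2
      simp only [hx, false_and, iff_false]
      exact fun h => h2 ⟨h1, h⟩
  filter_upwards [key, nhdsWithin_le_nhds (lt_mem_nhds hs), self_mem_nhdsWithin] with t ht htp hts
  have hts' : t < s := hts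
  have e : s • Q ∩ latticePts d = (t • Q ∩ latticePts d) ∪ ent Q s := by
    ext x
    constructor
    · rintro ⟨h1, h2⟩
      rcases (entT_le hs h1).lt_or_eq with h | h
      · exact Or.inl ⟨(ht x ⟨h2, norm_le_of hQ hs h1⟩).2 ⟨h1, h⟩, h2⟩
      · exact Or.inr ⟨⟨h1, h2⟩, h⟩
    · rintro (⟨h1, h2⟩ | h)
      · refine ⟨((ht x ⟨h2, (norm_le_of hQ htp h1).trans ?_⟩).1 h1).1, h2⟩
        gcongr
      · exact h.1
  unfold ehrhart
  rw [e, Set.ncard_union_eq ?_ (pts_fin hc htp) ((pts_fin hc hs).subset fun x h => h.1)]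
  rw [Set.disjoint_left]
  rintro x ⟨h1, _⟩ ⟨_, h3⟩
  have := entT_le htp h1
  linarith

lemma ent_eq {d : ℕ} {Q Q' : Set (Fin d → ℝ)} (hc : IsCompact Q) (h0 : (0 : Fin d → ℝ) ∉ Q)
    (hv : Convex ℝ Q) (hc' : IsCompact Q') (h0' : (0 : Fin d → ℝ) ∉ Q')
    (hv' : Convex ℝ Q') {S s : ℝ} (hS : 0 < S) (hE : ∀ s > S, ehrhart Q s = ehrhart Q' s)
    (hs : S < s) : (ent Q s).ncard = (ent Q' s).ncard := by
  have h3 : ∀ᶠ t in 𝓝[<] s, S < t := nhdsWithin_le_nhds (lt_mem_nhds hs)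
  obtain ⟨t, h1, h2, h3⟩ :=
    ((jump hc h0 hv (hS.trans hs)).and ((jump hc' h0' hv' (hS.trans hs)).and h3)).exists
  have := hE s hs
  have := hE t h3
  omega

/-- nonzero lattice points of the hull -/
def hpts {d : ℕ} (Q : Set (Fin d → ℝ)) (a b : ℝ) : Set (Fin d → ℝ) :=
  {x | x ∈ latticePts d ∧ (∃ s : ℝ, 0 < s ∧ x ∈ s • Q) ∧ a < entT Q x ∧ entT Q x ≤ b}

lemma hpts_fin {d : ℕ} {Q : Set (Fin d → ℝ)} (hc : IsCompact Q) (h0 : (0 : Fin d → ℝ) ∉ Q)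
    (a b : ℝ) : (hpts Q a b).Finite := by
  obtain ⟨R, hR, hQ⟩ := hc.isBounded.exists_pos_norm_le
  refine (lattice_fin (b * R)).subset ?_
  rintro x ⟨h1, ⟨s, hs, hx⟩, h2, h3⟩
  have := entT_mem hc h0 hs hx
  refine ⟨h1, (norm_le_of hQ this.1 this.2).trans ?_⟩
  gcongr

lemma hpts_fiber {d : ℕ} {Q : Set (Fin d → ℝ)} (hc : IsCompact Q) (h0 : (0 : Fin d → ℝ) ∉ Q)
    {a b s : ℝ} (ha : 0 < a) (h1 : a < s) (h2 : s ≤ b) :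
    {x ∈ hpts Q a b | entT Q x = s} = ent Q s := by
  ext x
  constructor
  · rintro ⟨⟨g1, ⟨u, hu, hx⟩, g2, g3⟩, g4⟩
    have := entT_mem hc h0 hu hx
    rw [g4] at this
    exact ⟨⟨this.2, g1⟩, g4⟩
  · rintro ⟨⟨g1, g2⟩, g3⟩
    exact ⟨⟨g2, ⟨s, ha.trans h1, g1⟩, by rw [g3]; exact h1, by rw [g3]; exact h2⟩, g3⟩

lemma hpts_card {d : ℕ} {Q Q' : Set (Fin d → ℝ)} (hc : IsCompact Q) (h0 : (0 : Fin d → ℝ) ∉ Q)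
    (hv : Convex ℝ Q) (hc' : IsCompact Q') (h0' : (0 : Fin d → ℝ) ∉ Q')
    (hv' : Convex ℝ Q') {S b : ℝ} (hS : 0 < S) (hE : ∀ s > S, ehrhart Q s = ehrhart Q' s) :
    (hpts Q S b).ncard = (hpts Q' S b).ncard := by
  classical
  have f1 := hpts_fin hc h0 S b
  have f2 := hpts_fin hc' h0' S b
  rw [Set.ncard_eq_toFinset_card _ f1, Set.ncard_eq_toFinset_card _ f2]
  set U := f1.toFinset.image (entT Q) ∪ f2.toFinset.image (entT Q') with hU
  rw [Finset.card_eq_sum_card_fiberwise (f := entT Q) (t := U),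
    Finset.card_eq_sum_card_fiberwise (f := entT Q') (t := U)]
  · refine Finset.sum_congr rfl fun s hs => ?_
    have hs' : S < s ∧ s ≤ b := by
      simp only [hU, Finset.mem_union, Finset.mem_image, Set.Finite.mem_toFinset] at hs
      rcases hs with ⟨x, hx, rfl⟩ | ⟨x, hx, rfl⟩
      · exact hx.2.2
      · exact hx.2.2
    have := ent_eq hc h0 hv hc' h0' hv' hS hE hs'.1
    rw [← hpts_fiber hc h0 hS hs'.1 hs'.2, ← hpts_fiber hc' h0' hS hs'.1 hs'.2] at this
    rw [← Set.ncard_coe_finset, ← Set.ncard_coe_finset]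
    simpa using this
  · intro x hx
    have : x ∈ f2.toFinset := hx
    exact Finset.mem_coe.2 (Finset.mem_union_right _ (Finset.mem_image_of_mem _ this))
  · intro x hx
    have : x ∈ f1.toFinset := hx
    exact Finset.mem_coe.2 (Finset.mem_union_left _ (Finset.mem_image_of_mem _ this))

def hull {d : ℕ} (Q : Set (Fin d → ℝ)) : Set (Fin d → ℝ) := convexHull ℝ (insert 0 Q)

lemma mem_hull {d : ℕ} {Q : Set (Fin d → ℝ)} (hv : Convex ℝ Q) (hne : Q.Nonempty)
    (x : Fin d → ℝ) : x ∈ hull Q ↔ ∃ t : ℝ, 0 ≤ t ∧ t ≤ 1 ∧ ∃ q ∈ Q, x = t • q := by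
  rw [hull, convexHull_insert hne, hv.convexHull_eq]
  simp only [convexJoin_singleton_left, Set.mem_iUnion, exists_prop]
  constructor
  · rintro ⟨q, hq, a, b, ha, hb, hab, rfl⟩
    exact ⟨b, hb, by linarith, q, hq, by simp⟩
  · rintro ⟨t, h0, h1, q, hq, rfl⟩
    exact ⟨q, hq, 1 - t, t, by linarith, h0, by linarith, by simp⟩

lemma hull_compact {d : ℕ} {Q : Set (Fin d → ℝ)} (hv : Convex ℝ Q) (hne : Q.Nonempty)
    (hc : IsCompact Q) : IsCompact (hull Q) := by
  have : hull Q = (fun p : ℝ × (Fin d → ℝ) => p.1 • p.2) '' (Set.Icc 0 1 ×ˢ Q) := by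
    ext x
    rw [mem_hull hv hne]
    constructor
    · rintro ⟨t, h0, h1, q, hq, rfl⟩
      exact ⟨(t, q), ⟨⟨h0, h1⟩, hq⟩, rfl⟩
    · rintro ⟨⟨t, q⟩, ⟨⟨h0, h1⟩, hq⟩, rfl⟩
      exact ⟨t, h0, h1, q, hq, rfl⟩
  rw [this]
  exact (isCompact_Icc.prod hc).image (by fun_prop)

lemma hull_card {d : ℕ} {Q : Set (Fin d → ℝ)} (hc : IsCompact Q) (h0 : (0 : Fin d → ℝ) ∉ Q)
    (hv : Convex ℝ Q) (hne : Q.Nonempty) {S b : ℝ} (hS : 0 < S) (hb : S ≤ b) :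
    (b • hull Q ∩ latticePts d).ncard = 1 + (hpts Q 0 S).ncard + (hpts Q S b).ncard := by
  have hbp : 0 < b := hS.trans_le hb
  have e : b • hull Q ∩ latticePts d = ({0} ∪ hpts Q 0 S) ∪ hpts Q S b := by
    ext x
    constructor
    · rintro ⟨h1, h2⟩
      obtain ⟨y, hy, rfl⟩ := h1
      obtain ⟨t, t0, t1, q, hq, rfl⟩ := (mem_hull hv hne y).1 hy
      rcases t0.eq_or_lt with rfl | t0
      · left; left; simp
      · have hm : (b • t • q) ∈ (b * t) • Q := ⟨q, hq, by simp [mul_smul]⟩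
        have hp : 0 < b * t := by positivity
        have g := entT_mem hc h0 hp hm
        have g' : entT Q (b • t • q) ≤ b := (entT_le hp hm).trans (by nlinarith)
        rcases le_or_gt (entT Q (b • t • q)) S with h | h
        · left; right
          exact ⟨h2, ⟨_, hp, hm⟩, g.1, h⟩
        · right
          exact ⟨h2, ⟨_, hp, hm⟩, h, g'⟩
    · have aux : ∀ a c, c ≤ b → x ∈ hpts Q a c → x ∈ b • hull Q ∩ latticePts d := by
        rintro a c hcb ⟨g1, ⟨s, hs, hx⟩, g2, g3⟩
        have g := entT_mem hc h0 hs hx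
        refine ⟨?_, g1⟩
        rw [Set.mem_smul_set_iff_inv_smul_mem₀ hbp.ne', mem_hull hv hne]
        obtain ⟨q, hq, e⟩ := g.2
        have e : entT Q x • q = x := e
        refine ⟨b⁻¹ * entT Q x, by have := g.1; positivity, ?_, q, hq, ?_⟩
        · rw [inv_mul_le_iff₀ hbp]; linarith
        · rw [mul_smul, e]
      rintro ((rfl | h) | h)
      · refine ⟨?_, fun i => ⟨0, by simp⟩⟩
        exact ⟨0, subset_convexHull ℝ _ (Set.mem_insert _ _), by simp⟩
      · exact aux _ _ hb h
      · exact aux _ _ le_rfl h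
  have z : ∀ a c, (0 : Fin d → ℝ) ∉ hpts Q a c := by
    rintro a c ⟨_, ⟨s, hs, hx⟩, _⟩
    rw [Set.mem_smul_set_iff_inv_smul_mem₀ hs.ne', smul_zero] at hx
    exact h0 hx
  have f1 := hpts_fin hc h0 0 S
  have f2 := hpts_fin hc h0 S b
  rw [e, Set.ncard_union_eq ?_ ((Set.finite_singleton _).union f1) f2,
    Set.ncard_union_eq ?_ (Set.finite_singleton _) f1, Set.ncard_singleton]
  · rw [Set.disjoint_singleton_left]; exact z _ _
  · rw [Set.disjoint_left]
    rintro x (rfl | h) h'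
    · exact z _ _ h'
    · have := h.2.2.2
      have := h'.2.2.1
      linarith

lemma hull_tendsto {d : ℕ} {Q : Set (Fin d → ℝ)} (hc : IsCompact Q)
    (hv : Convex ℝ Q) (hne : Q.Nonempty) :
    Tendsto (fun n : ℕ => (((n : ℝ) • hull Q ∩ latticePts d).ncard : ℝ) / n ^ d) atTop
      (𝓝 (volume.real (hull Q))) := by
  have hH := hull_compact hv hne hc
  have := tendsto_card_div_pow_atTop_volume (hull Q) hH.isBounded hH.measurableSet
    ((convex_convexHull ℝ _).addHaar_frontier volume)
  rw [Fintype.card_fin] at this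
  refine this.congr' ?_
  filter_upwards [eventually_gt_atTop 0] with n hn
  have hn' : (n : ℝ) ≠ 0 := by positivity
  congr 2
  rw [Nat.card_coe_set_eq, ← Set.ncard_image_of_injective _ (smul_right_injective _ hn'),
    Set.image_smul, Set.smul_set_inter₀ hn', smul_inv_smul₀ hn', lattice_eq]

lemma vol_eq {d : ℕ} (hd : d ≠ 0) {Q Q' : Set (Fin d → ℝ)} (hc : IsCompact Q)
    (h0 : (0 : Fin d → ℝ) ∉ Q)
    (hv : Convex ℝ Q) (hne : Q.Nonempty) (hc' : IsCompact Q') (h0' : (0 : Fin d → ℝ) ∉ Q')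
    (hv' : Convex ℝ Q') (hne' : Q'.Nonempty) {S : ℝ} (hS : 0 < S)
    (hE : ∀ s > S, ehrhart Q s = ehrhart Q' s) :
    volume.real (hull Q) = volume.real (hull Q') := by
  have h1 := (hull_tendsto hc hv hne).sub (hull_tendsto hc' hv' hne')
  have h2 : Tendsto (fun n : ℕ => (((hpts Q 0 S).ncard : ℝ) - (hpts Q' 0 S).ncard) / (n : ℝ) ^ d)
      atTop (𝓝 0) :=
    ((tendsto_pow_atTop hd).comp tendsto_natCast_atTop_atTop).const_div_atTop _
  refine sub_eq_zero.1 (tendsto_nhds_unique (h1.congr' ?_) h2)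
  filter_upwards [tendsto_natCast_atTop_atTop.eventually_ge_atTop S] with n hn
  rw [hull_card hc h0 hv hne hS hn, hull_card hc' h0' hv' hne' hS hn,
    hpts_card hc h0 hv hc' h0' hv' hS hE]
  push_cast
  ring

lemma vol_lt {d : ℕ} {H K : Set (Fin d → ℝ)} (hH : IsCompact H) (hHv : Convex ℝ H)
    (hi : (interior H).Nonempty) (hK : IsCompact K) (hKH : K ⊆ H) {z : Fin d → ℝ} (hz : z ∈ H)
    (hzK : z ∉ K) : volume.real K < volume.real H := by
  have hz' : z ∈ closure (interior H) := by
    rw [hHv.closure_interior_eq_closure_of_nonempty_interior hi]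
    exact subset_closure hz
  have hne : (Kᶜ ∩ interior H).Nonempty :=
    mem_closure_iff.1 hz' _ hK.isClosed.isOpen_compl hzK
  have hop : IsOpen (Kᶜ ∩ interior H) := hK.isClosed.isOpen_compl.inter isOpen_interior
  have hp : 0 < volume (H \ K) :=
    (hop.measure_pos volume hne).trans_le (measure_mono fun x hx => ⟨interior_subset hx.2, hx.1⟩)
  have := measureReal_sdiff (μ := volume) hKH hK.measurableSet hH.measure_lt_top.ne
  have hq : 0 < volume.real (H \ K) :=
    ENNReal.toReal_pos hp.ne' ((measure_mono Set.sdiff_subset).trans_lt hH.measure_lt_top).ne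
  linarith

end EhrAux

open EhrAux in
/-- for a full-dimensional polytope not containing the origin, any point
`v ∈ P` and reals `fl > mu ≥ 0`, the Ehrhart functions of `P + fl•v` and `P + mu•v`
differ at infinitely many positive `s`. -/
theorem stmt6 {d : ℕ} (P : Set (Fin d → ℝ)) (hP : IsPolytope P)
    (hfull : (interior P).Nonempty) (h0 : (0 : Fin d → ℝ) ∉ P)
    (v : Fin d → ℝ) (hv : v ∈ P) (mu fl : ℝ) (hmu : 0 ≤ mu) (hfl : mu < fl) :
    {s : ℝ | 0 < s ∧
      ehrhart (translateSet P (fl • v)) s ≠ ehrhart (translateSet P (mu • v)) s}.Infinite := by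
  obtain ⟨V, hVne, rfl⟩ := hP
  set P := convexHull ℝ (V : Set (Fin d → ℝ)) with hPdef
  have hd : d ≠ 0 := by
    rintro rfl
    exact h0 (by convert hv)
  have hPc : IsCompact P := V.finite_toSet.isCompact_convexHull ℝ
  have hPv : Convex ℝ P := convex_convexHull ℝ _
  obtain ⟨f, u, hu, hf⟩ := geometric_hahn_banach_point_closed hPv hPc.isClosed h0
  have hfpos : ∀ p ∈ P, 0 < f p := fun p hp => by
    have := hf p hp
    rw [map_zero] at hu
    linarith
  have tc : ∀ w, IsCompact (translateSet P w) := fun w => hPc.image (by fun_prop)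
  have tv : ∀ w, Convex ℝ (translateSet P w) := fun w => by
    have e : translateSet P w = (fun x => w + x) '' P :=
      Set.image_congr fun x _ => add_comm x w
    rw [e]
    exact hPv.translate w
  have tn : ∀ w, (translateSet P w).Nonempty := fun w => ⟨_, v, hv, rfl⟩
  have t0 : ∀ c : ℝ, 0 ≤ c → (0 : Fin d → ℝ) ∉ translateSet P (c • v) := by
    rintro c hc ⟨p, hp, e⟩
    have e := congrArg f e
    simp only [map_add, map_smul, smul_eq_mul, map_zero] at e
    have := hfpos p hp
    have := mul_nonneg hc (hfpos v hv).le
    linarith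
  intro hfin
  obtain ⟨B, hB⟩ := hfin.bddAbove
  have hS : 0 < max B 1 := by positivity
  have hE : ∀ s > max B 1, ehrhart (translateSet P (fl • v)) s
      = ehrhart (translateSet P (mu • v)) s := by
    intro s hs
    by_contra hne
    have := hB ⟨hS.trans hs, hne⟩
    have := le_max_left B 1
    linarith
  have hfl0 : 0 ≤ fl := hmu.trans hfl.le
  have hvol := vol_eq hd (tc _) (t0 fl hfl0) (tv _) (tn _) (tc _) (t0 mu hmu) (tv _) (tn _) hS hE
  set H := hull (translateSet P (fl • v)) with hH
  set w := (fl - mu) • v with hw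
  have hHv : Convex ℝ H := convex_convexHull ℝ _
  have hz : (0 : Fin d → ℝ) ∈ H := subset_convexHull ℝ _ (Set.mem_insert _ _)
  have hQH : translateSet P (fl • v) ⊆ H :=
    (Set.subset_insert _ _).trans (subset_convexHull ℝ _)
  have hi : (interior H).Nonempty := by
    refine Set.Nonempty.mono (interior_mono hQH) ?_
    obtain ⟨x, hx⟩ := hfull
    refine ⟨x + fl • v, ?_⟩
    have : translateSet P (fl • v) = Homeomorph.addRight (fl • v) '' P := rfl
    rw [this, ← Homeomorph.image_interior]
    exact ⟨x, hx, rfl⟩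
  have hwH : w ∈ H := by
    rw [hH, mem_hull (tv _) (tn _)]
    refine ⟨(fl - mu) / (1 + fl), by apply div_nonneg <;> linarith,
      by rw [div_le_one (by linarith)]; linarith, _, ⟨v, hv, rfl⟩, ?_⟩
    have : (1 + fl) ≠ 0 := by positivity
    ext i
    simp [hw]
    field_simp
  have hKH : (fun x => x + w) '' hull (translateSet P (mu • v)) ⊆ H := by
    rintro _ ⟨x, hx, rfl⟩
    obtain ⟨t, t0, t1, _, ⟨p, hp, rfl⟩, rfl⟩ := (mem_hull (tv _) (tn _) x).1 hx
    have h2 : p + fl • v ∈ H := hQH ⟨p, hp, rfl⟩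
    convert hHv hwH h2 (sub_nonneg.2 t1) t0 (by ring) using 1
    ext i
    simp [hw]
    ring
  have hzK : (0 : Fin d → ℝ) ∉ (fun x => x + w) '' hull (translateSet P (mu • v)) := by
    rintro ⟨x, hx, e⟩
    obtain ⟨t, t0, t1, _, ⟨p, hp, rfl⟩, rfl⟩ := (mem_hull (tv _) (tn _) x).1 hx
    have e := congrArg f e
    simp only [hw, map_add, map_smul, smul_eq_mul, map_zero] at e
    have h1 := hfpos p hp
    have h2 := hfpos v hv
    have h3 : 0 < (fl - mu) * f v := mul_pos (by linarith) h2
    have h4 : 0 ≤ t * (f p + mu * f v) := by positivity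
    linarith
  have hlt := vol_lt (hull_compact (tv _) (tn _) (tc _)) hHv hi
    ((hull_compact (tv (mu • v)) (tn _) (tc _)).image (f := fun x => x + w) (by fun_prop))
    hKH hz hzK
  have : volume.real ((fun x => x + w) '' hull (translateSet P (mu • v)))
      = volume.real (hull (translateSet P (mu • v))) := by
    simp [Measure.real, Set.image_add_right, measure_preimage_add_right]
  linarith
end

section
/- Let P = ⋂_{i=1}^n {x ∈ ℝ^d : ⟨a_i, x⟩ ≤ b_i} be a full-dimensional polytope (compact with nonempty interior) and let s₀ > 0. Then there exists δ > 0 such that: (i) for every s with s₀ − δ < s < s₀, L_P(s₀) − L_P(s) equals the number of points x ∈ ℤ^d with x ∈ s₀•P and ⟨a_i, x⟩ = s₀ b_i for some i with b_i > 0 (the integer points in the front facets of s₀•P); and (ii) for every s with s₀ < s < s₀ + δ, L_P(s₀) − L_P(s) equals the number of points x ∈ ℤ^d with x ∈ s₀•P and ⟨a_i, x⟩ = s₀ b_i for some i with b_i < 0 (the integer points in the back facets of s₀•P). -/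
open Set MeasureTheory Pointwise

theorem aux_mem {d n : ℕ} (a : Fin n → Fin d → ℝ) (b : Fin n → ℝ)
    (P : Set (Fin d → ℝ))
    (hPdef : P = ⋂ i, {x : Fin d → ℝ | dotProd (a i) x ≤ b i}) (s : ℝ) (hs : 0 < s)
    (x : Fin d → ℝ) : x ∈ s • P ↔ ∀ i, dotProd (a i) x ≤ s * b i := by
  rw [Set.mem_smul_set_iff_inv_smul_mem₀ hs.ne', hPdef]
  simp only [Set.mem_iInter, Set.mem_setOf_eq]
  refine forall_congr' fun i => ?_
  have : dotProd (a i) (s⁻¹ • x) = s⁻¹ * dotProd (a i) x := by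
    simp only [dotProd, Pi.smul_apply, smul_eq_mul, Finset.mul_sum]
    exact Finset.sum_congr rfl fun j _ => by ring
  rw [this, inv_mul_le_iff₀ hs]

theorem aux_fin (d : ℕ) (R : ℝ) :
    {x : Fin d → ℝ | x ∈ latticePts d ∧ ‖x‖ ≤ R}.Finite := by
  have hf : (Set.Icc (fun _ => -⌈R⌉ : Fin d → ℤ) (fun _ => ⌈R⌉)).Finite := Set.finite_Icc _ _
  refine (hf.image (fun m : Fin d → ℤ => fun i => (m i : ℝ))).subset ?_
  rintro x ⟨hx, hR⟩
  choose m hm using hx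
  have key : ∀ i, |(m i : ℝ)| ≤ (⌈R⌉ : ℝ) := fun i => by
    rw [← hm i, ← Real.norm_eq_abs]
    exact ((norm_le_pi_norm x i).trans hR).trans (Int.le_ceil R)
  refine ⟨m, ⟨fun i => ?_, fun i => ?_⟩, ?_⟩
  · have := (abs_le.1 (key i)).1
    exact_mod_cast this
  · have := (abs_le.1 (key i)).2
    exact_mod_cast this
  · funext i
    exact (hm i).symm

theorem aux_delta {d n : ℕ} (a : Fin n → Fin d → ℝ) (b : Fin n → ℝ)
    (S : Set (Fin d → ℝ)) (hS : S.Finite) (s₀ : ℝ) :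
    ∃ δ : ℝ, 0 < δ ∧ ∀ s, |s - s₀| < δ → ∀ x ∈ S, ∀ i,
      (dotProd (a i) x < s₀ * b i → dotProd (a i) x < s * b i) ∧
      (s₀ * b i < dotProd (a i) x → s * b i < dotProd (a i) x) := by
  have h : ∀ᶠ s in nhds s₀, ∀ x ∈ S, ∀ i,
      (dotProd (a i) x < s₀ * b i → dotProd (a i) x < s * b i) ∧
      (s₀ * b i < dotProd (a i) x → s * b i < dotProd (a i) x) := by
    rw [Filter.eventually_all_finite hS]
    intro x _
    rw [Filter.eventually_all]
    intro i
    have hc : Filter.Tendsto (fun s : ℝ => s * b i) (nhds s₀) (nhds (s₀ * b i)) :=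
      (continuous_id.mul continuous_const).tendsto s₀
    refine Filter.Eventually.and ?_ ?_
    · by_cases h : dotProd (a i) x < s₀ * b i
      · filter_upwards [hc.eventually_const_lt h] with s hs _ using hs
      · exact Filter.Eventually.of_forall fun s h' => absurd h' h
    · by_cases h : s₀ * b i < dotProd (a i) x
      · filter_upwards [hc.eventually_lt_const h] with s hs _ using hs
      · exact Filter.Eventually.of_forall fun s h' => absurd h' h
  obtain ⟨δ, hδ, H⟩ := Metric.eventually_nhds_iff.1 h
  exact ⟨δ, hδ, fun s hs => H (by rwa [Real.dist_eq])⟩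

theorem aux_count {α : Type*} (A B C L : Set α) (hA : (A ∩ L).Finite)
    (hBA : ∀ x ∈ L, x ∈ B → x ∈ A) (hC : ∀ x, x ∈ C ↔ x ∈ L ∧ x ∈ A ∧ x ∉ B) :
    ((A ∩ L).ncard : ℤ) - ((B ∩ L).ncard : ℤ) = C.ncard := by
  have hsub : B ∩ L ⊆ A ∩ L := fun x hx => ⟨hBA x hx.2 hx.1, hx.2⟩
  have h := Set.ncard_sdiff_add_ncard_of_subset hsub hA
  have hCe : C = (A ∩ L) \ (B ∩ L) := by
    ext x
    rw [hC]
    simp only [Set.mem_sdiff, Set.mem_inter_iff]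
    tauto
  rw [hCe]
  omega

/-- near a dilation parameter `s₀`, the jumps of the Ehrhart function of a
full-dimensional polytope are counted by the lattice points in the front (resp. back)
facets of `s₀ • P`. -/
theorem stmt7 {d n : ℕ} (a : Fin n → Fin d → ℝ) (b : Fin n → ℝ)
    (P : Set (Fin d → ℝ))
    (hPdef : P = ⋂ i, {x : Fin d → ℝ | dotProd (a i) x ≤ b i})
    (hcomp : IsCompact P) (hint : (interior P).Nonempty)
    (s₀ : ℝ) (hs₀ : 0 < s₀) :
    ∃ δ : ℝ, 0 < δ ∧
      (∀ s : ℝ, s₀ - δ < s → s < s₀ →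
        (ehrhart P s₀ : ℤ) - (ehrhart P s : ℤ) =
          ({x : Fin d → ℝ | x ∈ latticePts d ∧ x ∈ s₀ • P ∧
            ∃ i, 0 < b i ∧ dotProd (a i) x = s₀ * b i}).ncard) ∧
      (∀ s : ℝ, s₀ < s → s < s₀ + δ →
        (ehrhart P s₀ : ℤ) - (ehrhart P s : ℤ) =
          ({x : Fin d → ℝ | x ∈ latticePts d ∧ x ∈ s₀ • P ∧
            ∃ i, b i < 0 ∧ dotProd (a i) x = s₀ * b i}).ncard) := by
  obtain ⟨R, hR⟩ := hcomp.isBounded.exists_norm_le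
  have hS := aux_fin d (2 * s₀ * R)
  obtain ⟨δ, hδ, H⟩ := aux_delta a b _ hS s₀
  have hin : ∀ s, 0 < s → s < 2 * s₀ → ∀ x ∈ latticePts d, x ∈ s • P →
      x ∈ {x : Fin d → ℝ | x ∈ latticePts d ∧ ‖x‖ ≤ 2 * s₀ * R} := by
    rintro s hs hs2 x hx ⟨y, hy, rfl⟩
    refine ⟨hx, ?_⟩
    have h1 := hR y hy
    have h0 := norm_nonneg y
    simp only [norm_smul, Real.norm_eq_abs, abs_of_pos hs]
    exact mul_le_mul hs2.le h1 h0 (by linarith)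
  have hAfin : ((s₀ • P) ∩ latticePts d).Finite :=
    hS.subset fun x hx => hin s₀ hs₀ (by linarith) x hx.2 hx.1
  have hsubset : ∀ s, 0 < s → s < 2 * s₀ → |s - s₀| < δ →
      ∀ x ∈ latticePts d, x ∈ s • P → x ∈ s₀ • P := by
    intro s hs hs2 hsd x hx hxP
    have hxS := hin s hs hs2 x hx hxP
    rw [aux_mem a b P hPdef s hs] at hxP
    rw [aux_mem a b P hPdef s₀ hs₀]
    intro i
    by_contra hcon
    exact absurd (hxP i) (not_le.2 ((H s hsd x hxS i).2 (not_le.1 hcon)))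
  refine ⟨min δ s₀, lt_min hδ hs₀, fun s hs1 hs2 => ?_, fun s hs1 hs2 => ?_⟩
  · have e1 := min_le_left δ s₀
    have e2 := min_le_right δ s₀
    have hs : 0 < s := by linarith
    have hsd : |s - s₀| < δ := by rw [abs_lt]; constructor <;> linarith
    refine aux_count _ _ _ _ hAfin (hsubset s hs (by linarith) hsd) fun x => ?_
    refine and_congr_right fun hx => and_congr_right fun hxP => ?_
    have hxS := hin s₀ hs₀ (by linarith) x hx hxP
    rw [aux_mem a b P hPdef s₀ hs₀] at hxP
    rw [aux_mem a b P hPdef s hs]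
    push Not
    constructor
    · rintro ⟨i, hb, he⟩
      exact ⟨i, by rw [he]; exact mul_lt_mul_of_pos_right hs2 hb⟩
    · rintro ⟨i, hi⟩
      have he : dotProd (a i) x = s₀ * b i := by
        refine le_antisymm (hxP i) (not_lt.1 fun h => ?_)
        exact lt_asymm hi ((H s hsd x hxS i).1 h)
      refine ⟨i, ?_, he⟩
      by_contra hb
      nlinarith
  · have e1 := min_le_left δ s₀
    have e2 := min_le_right δ s₀
    have hs : 0 < s := by linarith
    have hsd : |s - s₀| < δ := by rw [abs_lt]; constructor <;> linarith
    refine aux_count _ _ _ _ hAfin (hsubset s hs (by linarith) hsd) fun x => ?_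
    refine and_congr_right fun hx => and_congr_right fun hxP => ?_
    have hxS := hin s₀ hs₀ (by linarith) x hx hxP
    rw [aux_mem a b P hPdef s₀ hs₀] at hxP
    rw [aux_mem a b P hPdef s hs]
    push Not
    constructor
    · rintro ⟨i, hb, he⟩
      exact ⟨i, by rw [he]; exact mul_lt_mul_of_neg_right hs1 hb⟩
    · rintro ⟨i, hi⟩
      have he : dotProd (a i) x = s₀ * b i := by
        refine le_antisymm (hxP i) (not_lt.1 fun h => ?_)
        exact lt_asymm hi ((H s hsd x hxS i).1 h)
      refine ⟨i, ?_, he⟩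
      by_contra hb
      nlinarith
end

section
/- Let P ⊆ ℝ^d be a full-dimensional polytope. Then for every ε > 0 there exists N > 0 such that for every vector v ∈ ℝ^d and every real s > N, |L_{P+v}(s)/s^d − vol(P)| < ε, where vol denotes Lebesgue measure on ℝ^d. In particular lim_{s→∞} L_{P+v}(s)/s^d = vol(P), uniformly in v. -/
open Set MeasureTheory Pointwise

def zcube {d : ℕ} (n : Fin d → ℤ) : Set (Fin d → ℝ) :=
  Set.univ.pi fun i => Set.Ico (n i : ℝ) (n i + 1)

theorem mem_zcube {d : ℕ} (n : Fin d → ℤ) (x : Fin d → ℝ) :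
    x ∈ zcube n ↔ ∀ i, ⌊x i⌋ = n i := by
  simp [zcube, Set.mem_pi, Int.floor_eq_iff]

theorem vol_zcubes {d : ℕ} (A : Set (Fin d → ℤ)) :
    volume (⋃ n ∈ A, zcube n) = ((A.encard : ℕ∞) : ENNReal) := by
  rw [measure_biUnion A.to_countable]
  · have : ∀ n : Fin d → ℤ, volume (zcube n) = 1 := by
      intro n
      simp [zcube, volume_pi_pi]
    simp only [this]
    exact ENNReal.tsum_set_one A
  · intro a _ b _ hab
    refine Set.disjoint_left.2 fun x hx hy => hab ?_
    rw [mem_zcube] at hx hy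
    funext i
    rw [← hx i, hy i]
  · intro n _
    exact MeasurableSet.univ_pi fun i => measurableSet_Ico

theorem count_bounds {d : ℕ} (K : Set (Fin d → ℝ)) (hK : Convex ℝ K) (hfin : volume K ≠ ⊤)
    (r : ℝ) (hr : 0 < r) (hball : ∀ y : Fin d → ℝ, ‖y‖ ≤ r → y ∈ K) (c : Fin d → ℝ) (s : ℝ)
    (hs : 1 / r < s) :
    (s - 1 / r) ^ d * (volume K).toReal ≤ (((c +ᵥ s • K) ∩ latticePts d).ncard : ℝ) ∧
    (((c +ᵥ s • K) ∩ latticePts d).ncard : ℝ) ≤ (s + 1 / r) ^ d * (volume K).toReal := by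
  have hR : 0 < 1 / r := by positivity
  set A : Set (Fin d → ℤ) := {n | (fun i => (n i : ℝ)) ∈ c +ᵥ s • K} with hA
  have hcard : ((c +ᵥ s • K) ∩ latticePts d).ncard = A.ncard := by
    have h : (c +ᵥ s • K) ∩ latticePts d = (fun (n : Fin d → ℤ) (i : Fin d) => (n i : ℝ)) '' A := by
      ext x
      constructor
      · rintro ⟨hx, hl⟩
        choose m hm using hl
        have hxm : x = fun i => (m i : ℝ) := funext hm
        exact ⟨m, by rw [hA, Set.mem_ofPred_eq, ← hxm]; exact hx, hxm.symm⟩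
      · rintro ⟨n, hn, rfl⟩
        exact ⟨hn, fun i => ⟨n i, rfl⟩⟩
    rw [h, Set.ncard_image_of_injective]
    intro a b hab
    funext i
    have h3 : (a i : ℝ) = b i := congrFun hab i
    exact_mod_cast h3
  have hb : ∀ y : Fin d → ℝ, ‖y‖ ≤ 1 → y ∈ (1 / r) • K := by
    intro y hy
    refine ⟨r • y, hball _ ?_, ?_⟩
    · rw [norm_smul, Real.norm_of_nonneg hr.le]; nlinarith
    · simp [smul_smul, hr.ne']
  have hfr : ∀ (n : Fin d → ℤ) (x : Fin d → ℝ), x ∈ zcube n →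
      ‖x - fun i => (n i : ℝ)‖ ≤ 1 := by
    intro n x hx
    rw [pi_norm_le_iff_of_nonneg zero_le_one]
    intro i
    have := hx i (Set.mem_univ i)
    simp only [Pi.sub_apply, Real.norm_eq_abs, abs_le]
    constructor <;> linarith [this.1, this.2]
  have hvol : ∀ t : ℝ, 0 ≤ t → volume (c +ᵥ t • K) = ENNReal.ofReal (t ^ d) * volume K := by
    intro t ht
    rw [measure_vadd, Measure.addHaar_smul]
    simp [abs_of_nonneg ht]
  have hup : (⋃ n ∈ A, zcube n) ⊆ c +ᵥ (s + 1 / r) • K := by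
    intro x hx
    simp only [Set.mem_iUnion] at hx
    obtain ⟨n, hn, hx⟩ := hx
    obtain ⟨y, hy, hyn⟩ := hn
    rw [hK.add_smul (by linarith) hR.le]
    refine ⟨y + (x - fun i => (n i : ℝ)), Set.add_mem_add hy (hb _ (hfr n x hx)), ?_⟩
    simp only [vadd_eq_add] at hyn ⊢
    rw [← hyn]; abel
  have hlo : c +ᵥ (s - 1 / r) • K ⊆ ⋃ n ∈ A, zcube n := by
    rintro x ⟨y, hy, rfl⟩
    simp only [Set.mem_iUnion, vadd_eq_add]
    set n : Fin d → ℤ := fun i => ⌊(c + y) i⌋ with hn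
    have hx : c + y ∈ zcube n := (mem_zcube _ _).2 fun i => rfl
    refine ⟨n, ?_, hx⟩
    have h1 := hb (-((c + y) - fun i => (n i : ℝ))) (by rw [norm_neg]; exact hfr n _ hx)
    have h2 : s • K = (s - 1 / r) • K + (1 / r) • K := by
      rw [← hK.add_smul (by linarith) hR.le]; congr 1; ring
    rw [hA, Set.mem_ofPred_eq, h2]
    refine ⟨_, Set.add_mem_add hy h1, ?_⟩
    simp only [vadd_eq_add]
    abel
  have h1 := measure_mono (μ := volume) hup
  have h2 := measure_mono (μ := volume) hlo
  rw [vol_zcubes, hvol _ (by linarith)] at h1 h2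
  have hne : ∀ t : ℝ, ENNReal.ofReal t * volume K ≠ ⊤ := fun t =>
    ENNReal.mul_ne_top ENNReal.ofReal_ne_top hfin
  have hAf : A.Finite := by
    rw [← Set.encard_ne_top_iff]
    intro h
    rw [h] at h1
    exact hne _ (top_le_iff.1 (by simpa using h1))
  rw [← hAf.cast_ncard_eq] at h1 h2
  have h1' := ENNReal.toReal_mono (hne _) h1
  have h2' := ENNReal.toReal_mono (by simp) h2
  rw [ENNReal.toReal_mul, ENNReal.toReal_ofReal (pow_nonneg (by linarith) _)] at h1' h2'
  rw [hcard]
  exact ⟨by simpa using h2', by simpa using h1'⟩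

theorem lim_aux (d : ℕ) (R V : ℝ) :
    Filter.Tendsto (fun s : ℝ => (s + R) ^ d * V / s ^ d) Filter.atTop (nhds V) := by
  have h1 : Filter.Tendsto (fun s : ℝ => (1 + R * s⁻¹) ^ d * V) Filter.atTop
      (nhds ((1 + R * 0) ^ d * V)) :=
    (((tendsto_inv_atTop_zero.const_mul R).const_add 1).pow d).mul_const V
  have h2 : (1 + R * 0) ^ d * V = V := by simp
  rw [h2] at h1
  refine h1.congr' ?_
  filter_upwards [Filter.eventually_gt_atTop 0] with s hs
  rw [mul_div_right_comm, ← div_pow]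
  congr 2
  field_simp

/-- `L_{P+v}(s)/s^d → vol(P)` as `s → ∞`, uniformly in the translation
vector `v`, for a full-dimensional polytope `P`. -/
theorem stmt8 {d : ℕ} (P : Set (Fin d → ℝ)) (hP : IsPolytope P)
    (hfull : (interior P).Nonempty) :
    ∀ ε : ℝ, 0 < ε → ∃ N : ℝ, 0 < N ∧ ∀ (v : Fin d → ℝ) (s : ℝ), N < s →
      |(ehrhart (translateSet P v) s : ℝ) / s ^ d - (volume P).toReal| < ε := by
  intro ε hε
  obtain ⟨V, -, hV⟩ := hP
  have hconv : Convex ℝ P := hV ▸ convex_convexHull ℝ _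
  have hcomp : IsCompact P := hV ▸ V.finite_toSet.isCompact_convexHull ℝ
  obtain ⟨x0, hx0⟩ := hfull
  obtain ⟨r, hr, hrP⟩ := Metric.nhds_basis_closedBall.mem_iff.1 (mem_interior_iff_mem_nhds.1 hx0)
  have hKv : volume (-x0 +ᵥ P) = volume P := measure_vadd _ _ _
  have key := count_bounds (-x0 +ᵥ P) (hconv.vadd _) (by rw [hKv]; exact hcomp.measure_lt_top.ne) r hr
    (by
      intro y hy
      refine ⟨x0 + y, hrP (by simpa using hy), by simp⟩)
  rw [hKv] at key
  have e1 := (Metric.tendsto_nhds.1 (lim_aux d (1 / r) (volume P).toReal)) ε hε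
  have e2 := (Metric.tendsto_nhds.1 (lim_aux d (-(1 / r)) (volume P).toReal)) ε hε
  obtain ⟨N, hN⟩ := Filter.eventually_atTop.1 (e1.and e2)
  refine ⟨max N (1 / r), lt_max_of_lt_right (by positivity), fun v s hs => ?_⟩
  have hs1 : N < s := (le_max_left _ _).trans_lt hs
  have hs2 : 1 / r < s := (le_max_right _ _).trans_lt hs
  have hs0 : 0 < s := lt_trans (by positivity) hs2
  obtain ⟨k1, k2⟩ := key (s • (x0 + v)) s hs2
  have hset : s • (x0 + v) +ᵥ s • (-x0 +ᵥ P) = s • translateSet P v := by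
    ext z
    simp only [Set.mem_vadd_set, Set.mem_smul_set, translateSet, Set.mem_image, vadd_eq_add]
    constructor
    · rintro ⟨_, ⟨_, ⟨p, hp, rfl⟩, rfl⟩, rfl⟩
      exact ⟨_, ⟨p, hp, rfl⟩, by rw [← smul_add]; congr 1; abel⟩
    · rintro ⟨_, ⟨p, hp, rfl⟩, rfl⟩
      exact ⟨_, ⟨_, ⟨p, hp, rfl⟩, rfl⟩, by rw [← smul_add]; congr 1; abel⟩
  rw [hset] at k1 k2
  obtain ⟨l1, l2⟩ := hN s hs1.le
  rw [Real.dist_eq, abs_lt] at l1 l2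
  have hsd : 0 < s ^ d := pow_pos hs0 d
  have m1 := div_le_div_of_nonneg_right k1 hsd.le
  have m2 := div_le_div_of_nonneg_right k2 hsd.le
  rw [sub_eq_add_neg] at m1
  rw [abs_lt]
  unfold ehrhart
  constructor <;> linarith [l1.1, l1.2, l2.1, l2.2]
end

section
/- Let P ⊆ ℝ^d be a semi-rational polytope whose affine span has dimension l, let v₀ be a point of the affine span of P, and let A be a unimodular linear transformation of ℝ^d (given by an integer matrix with determinant ±1) that maps the linear subspace (aff P) − v₀ onto ℝ^l × {0}^{d−l}. Let P' ⊆ ℝ^l be the image of A(P − v₀) under the projection to the first l coordinates. Then for every ε > 0 there exists N > 0 such that for every vector v ∈ ℝ^d and every real s > N for which the affine span of s•(P + v) contains an integer point, one has |L_{P+v}(s)/s^l − vol_{ℝ^l}(P')| < ε, where vol_{ℝ^l} is Lebesgue measure on ℝ^l. (The quantity vol_{ℝ^l}(P') is the relative volume of P.) -/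
open Set MeasureTheory Pointwise

theorem cell_mem_aux {l : ℕ} (u : Fin l → ℝ) (s : ℝ) (hs : 0 < s) (z : Fin l → ℤ) (x : Fin l → ℝ) :
    x ∈ pi univ (fun i => Ico (((z i : ℝ) - u i) / s) (((z i : ℝ) - u i) / s + 1 / s)) ↔
      ∀ i, ⌊s * x i + u i⌋ = z i := by
  simp only [mem_pi, mem_univ, true_imp_iff, mem_Ico, Int.floor_eq_iff]
  refine forall_congr' fun i => ?_
  rw [← add_div, div_le_iff₀ hs, lt_div_iff₀ hs]
  constructor <;> rintro ⟨h1, h2⟩ <;> constructor <;> linarith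

theorem core_count {l : ℕ} (K : Set (Fin l → ℝ)) (hK : IsCompact K) (hc : Convex ℝ K)
    (ε : ℝ) (hε : 0 < ε) : ∃ N : ℝ, 0 < N ∧ ∀ (u : Fin l → ℝ) (s : ℝ), N < s →
      |(({z : Fin l → ℤ | (fun i => ((z i : ℝ) - u i) / s) ∈ K}.ncard : ℕ) : ℝ) / s ^ l
        - (volume K).toReal| < ε := by
  have hKfin : volume K ≠ ⊤ := hK.measure_lt_top.ne
  have T1 : Filter.Tendsto (fun r => volume.real (Metric.cthickening r K)) (nhds 0)
      (nhds (volume.real K)) :=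
    (ENNReal.tendsto_toReal hKfin).comp (tendsto_measure_cthickening_of_isCompact hK)
  have hfin : IsFiniteMeasure (volume.restrict K) := ⟨by simpa using hK.measure_lt_top⟩
  have h0 : (volume.restrict K) (closure Kᶜ) = 0 := by
    rw [Measure.restrict_apply isClosed_closure.measurableSet]
    refine measure_mono_null ?_ (hc.addHaar_frontier volume)
    rw [frontier_eq_closure_inter_closure]
    exact fun x hx => ⟨subset_closure hx.2, hx.1⟩
  have T2 : Filter.Tendsto (fun r => (volume.restrict K).real (Metric.cthickening r Kᶜ)) (nhds 0)
      (nhds 0) := by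
    have := (ENNReal.tendsto_toReal (measure_ne_top (volume.restrict K) (closure Kᶜ))).comp
      (tendsto_measure_cthickening (μ := volume.restrict K) (s := Kᶜ)
        ⟨1, one_pos, measure_ne_top _ _⟩)
    rw [h0] at this
    exact this
  have E1 := T1.eventually (gt_mem_nhds (show volume.real K < volume.real K + ε by linarith))
  have E2 := T2.eventually (gt_mem_nhds hε)
  obtain ⟨δ, hδ, hE⟩ := Metric.eventually_nhds_iff.1 (E1.and E2)
  refine ⟨1 / δ, by positivity, fun u s hs => ?_⟩
  have hs0 : 0 < s := lt_trans (by positivity) hs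
  have hsd : 1 / s < δ := by
    rw [div_lt_iff₀ hδ] at hs
    rw [div_lt_iff₀ hs0]; linarith
  obtain ⟨e1, e2⟩ := hE (y := 1 / s) (by
    rw [Real.dist_eq, sub_zero, abs_of_pos (by positivity)]; exact hsd)
  set S : Set (Fin l → ℤ) := {z : Fin l → ℤ | (fun i => ((z i : ℝ) - u i) / s) ∈ K} with hS
  set C : (Fin l → ℤ) → Set (Fin l → ℝ) := fun z =>
    pi univ (fun i => Ico (((z i : ℝ) - u i) / s) (((z i : ℝ) - u i) / s + 1 / s)) with hC
  have hCm : ∀ z x, x ∈ C z ↔ ∀ i, ⌊s * x i + u i⌋ = z i := fun z x => cell_mem_aux u s hs0 z x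
  have hvC : ∀ z, volume (C z) = ENNReal.ofReal (1 / s) ^ l := by
    intro z
    rw [hC]
    simp only [Real.volume_pi_Ico, add_sub_cancel_left]
    simp
  have hdist : ∀ z x, x ∈ C z → dist x (fun i => ((z i : ℝ) - u i) / s) ≤ 1 / s := by
    intro z x hx
    refine (dist_pi_le_iff (by positivity)).2 fun i => ?_
    have := hx i (mem_univ i)
    rw [mem_Ico] at this
    rw [Real.dist_eq, abs_le]
    constructor <;> [skip; skip] <;> have : 0 < 1 / s := by positivity
    all_goals linarith
  have hvU : volume (⋃ z ∈ S, C z) = S.encard * ENNReal.ofReal (1 / s) ^ l := by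
    rw [measure_biUnion (to_countable S)]
    · simp only [hvC]
      rw [ENNReal.tsum_set_const]
    · intro z _ w _ hzw
      refine Set.disjoint_left.2 fun x hx hx' => hzw ?_
      funext i
      rw [← (hCm z x).1 hx i, ← (hCm w x).1 hx' i]
    · intro z _
      exact MeasurableSet.univ_pi fun i => measurableSet_Ico
  have hrU : volume.real (⋃ z ∈ S, C z) = (S.ncard : ℝ) / s ^ l := by
    rw [measureReal_def, hvU, ENNReal.toReal_mul, ENNReal.toReal_pow,
      ENNReal.toReal_ofReal (by positivity), one_div, inv_pow, div_eq_mul_inv]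
    congr 1
    rcases S.finite_or_infinite with h | h
    · rw [← h.cast_ncard_eq]; simp
    · rw [h.encard_eq, h.ncard]; simp
  have hsub1 : (⋃ z ∈ S, C z) ⊆ Metric.cthickening (1 / s) K := by
    refine iUnion₂_subset fun z hz x hx => ?_
    exact Metric.mem_cthickening_of_dist_le x _ _ K hz (hdist z x hx)
  have hfin1 : volume (Metric.cthickening (1 / s) K) ≠ ⊤ :=
    hK.isBounded.cthickening.measure_lt_top.ne
  have hfinU : volume (⋃ z ∈ S, C z) ≠ ⊤ := ne_top_of_le_ne_top hfin1 (measure_mono hsub1)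
  have b1 := measureReal_mono hsub1 hfin1
  have hsub2 : K ⊆ (⋃ z ∈ S, C z) ∪ (Metric.cthickening (1 / s) Kᶜ ∩ K) := by
    intro x hx
    let z : Fin l → ℤ := fun i => ⌊s * x i + u i⌋
    have hxz : x ∈ C z := (hCm z x).2 fun i => rfl
    by_cases hz : z ∈ S
    · exact Or.inl (mem_biUnion hz hxz)
    · exact Or.inr ⟨Metric.mem_cthickening_of_dist_le x _ _ _ hz (hdist z x hxz), hx⟩
  have hfin2 : volume (Metric.cthickening (1 / s) Kᶜ ∩ K) ≠ ⊤ :=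
    ne_top_of_le_ne_top hKfin (measure_mono inter_subset_right)
  have b2 : volume.real K ≤ volume.real (⋃ z ∈ S, C z)
      + volume.real (Metric.cthickening (1 / s) Kᶜ ∩ K) :=
    (measureReal_mono hsub2 (measure_union_lt_top hfinU.lt_top hfin2.lt_top).ne).trans
      (measureReal_union_le _ _)
  rw [measureReal_def (volume.restrict K),
    Measure.restrict_apply Metric.isClosed_cthickening.measurableSet, ← measureReal_def] at e2
  rw [hrU] at b1 b2
  rw [← measureReal_def, abs_lt]
  constructor <;> linarith

theorem lattice_mulVec_aux {d : ℕ} (M : Matrix (Fin d) (Fin d) ℤ) (x : Fin d → ℝ)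
    (hx : x ∈ latticePts d) : Matrix.toLin' (M.map (Int.cast : ℤ → ℝ)) x ∈ latticePts d := by
  choose m hm using hx
  intro i
  refine ⟨∑ j, M i j * m j, ?_⟩
  simp [Matrix.mulVec, dotProduct, hm]

theorem lattice_add_aux {d : ℕ} (x y : Fin d → ℝ)
    (hx : x ∈ latticePts d) (hy : y ∈ latticePts d) : x + y ∈ latticePts d := by
  intro i
  obtain ⟨m, hm⟩ := hx i
  obtain ⟨n, hn⟩ := hy i
  exact ⟨m + n, by simp [hm, hn]⟩

theorem lattice_sub_aux {d : ℕ} (x y : Fin d → ℝ)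
    (hx : x ∈ latticePts d) (hy : y ∈ latticePts d) : x - y ∈ latticePts d := by
  intro i
  obtain ⟨m, hm⟩ := hx i
  obtain ⟨n, hn⟩ := hy i
  exact ⟨m - n, by simp [hm, hn]⟩

theorem affine_aux {d : ℕ} (P : Set (Fin d → ℝ)) (v : Fin d → ℝ) (s : ℝ) (x : Fin d → ℝ)
    (hx : x ∈ affineSpan ℝ (s • translateSet P v)) : ∃ q ∈ affineSpan ℝ P, x = s • (q + v) := by
  let f : (Fin d → ℝ) →ᵃ[ℝ] (Fin d → ℝ) :=
    s • (AffineMap.id ℝ (Fin d → ℝ) + AffineMap.const ℝ (Fin d → ℝ) v)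
  have hf : ∀ y, f y = s • (y + v) := fun y => by simp [f]
  have he : s • translateSet P v = f '' P := by
    rw [translateSet, ← image_smul, image_image]
    exact image_congr fun y _ => (hf y).symm
  rw [he, ← AffineSubspace.map_span, AffineSubspace.mem_map] at hx
  obtain ⟨q, hq, rfl⟩ := hx
  exact ⟨q, hq, hf q⟩

/-- for an `l`-dimensional semi-rational polytope, `L_{P+v}(s)/s^l`
converges (uniformly in `v`, along those `s` for which the affine span of `s•(P+v)`
contains a lattice point) to the relative volume of `P`, computed as the `l`-dimensional
volume of a unimodular image of `P` projected to `ℝ^l`. -/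
theorem stmt9 {d l : ℕ} (hl : l ≤ d) (P : Set (Fin d → ℝ))
    (hP : IsSemiRationalPolytope P)
    (hdim : Module.finrank ℝ (affineSpan ℝ P).direction = l)
    (v₀ : Fin d → ℝ) (hv₀ : v₀ ∈ affineSpan ℝ P)
    (A : Matrix (Fin d) (Fin d) ℤ) (hA : A.det = 1 ∨ A.det = -1)
    (hmap : (fun x : Fin d → ℝ => fun i => ∑ j, (A i j : ℝ) * x j) ''
        ((fun x => x - v₀) '' (affineSpan ℝ P : Set (Fin d → ℝ)))
      = {y : Fin d → ℝ | ∀ i : Fin d, l ≤ (i : ℕ) → y i = 0})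
    (P' : Set (Fin l → ℝ))
    (hP' : P' = (fun y : Fin d → ℝ => fun i : Fin l => y (Fin.castLE hl i)) ''
        ((fun x : Fin d → ℝ => fun i => ∑ j, (A i j : ℝ) * x j) ''
          ((fun x => x - v₀) '' P))) :
    ∀ ε : ℝ, 0 < ε → ∃ N : ℝ, 0 < N ∧ ∀ (v : Fin d → ℝ) (s : ℝ), N < s →
      (∃ x ∈ affineSpan ℝ (s • translateSet P v), x ∈ latticePts d) →
      |(ehrhart (translateSet P v) s : ℝ) / s ^ l - (volume P').toReal| < ε := by
  intro ε hε
  obtain ⟨⟨V, -, hPV⟩, -⟩ := hP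
  have hdet : IsUnit A.det := by rcases hA with h | h <;> simp [h]
  set F : (Fin d → ℝ) →ₗ[ℝ] (Fin d → ℝ) := Matrix.toLin' (A.map (Int.cast : ℤ → ℝ)) with hF
  set G : (Fin d → ℝ) →ₗ[ℝ] (Fin d → ℝ) := Matrix.toLin' (A⁻¹.map (Int.cast : ℤ → ℝ)) with hG
  have hcast : ∀ M N : Matrix (Fin d) (Fin d) ℤ, M * N = 1 → ∀ x : Fin d → ℝ,
      Matrix.toLin' (M.map (Int.cast : ℤ → ℝ)) (Matrix.toLin' (N.map (Int.cast : ℤ → ℝ)) x) = x := by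
    intro M N h x
    have h2 : M.map (Int.cast : ℤ → ℝ) * N.map (Int.cast : ℤ → ℝ) = 1 := by
      have := congrArg (fun X => X.map (Int.castRingHom ℝ)) h
      rw [Matrix.map_mul] at this
      simpa using this
    rw [Matrix.toLin'_apply, Matrix.toLin'_apply, Matrix.mulVec_mulVec, h2, Matrix.one_mulVec]
  have hFG : ∀ x, F (G x) = x := hcast _ _ (Matrix.mul_nonsing_inv A hdet)
  have hGF : ∀ x, G (F x) = x := hcast _ _ (Matrix.nonsing_inv_mul A hdet)
  have hFe : (fun x : Fin d → ℝ => fun i => ∑ j, (A i j : ℝ) * x j) = F := by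
    funext x i
    simp [hF, Matrix.mulVec, dotProduct]
  let pr : (Fin d → ℝ) →ₗ[ℝ] (Fin l → ℝ) := LinearMap.funLeft ℝ ℝ (Fin.castLE hl)
  have hpre : (fun y : Fin d → ℝ => fun i : Fin l => y (Fin.castLE hl i)) = pr := rfl
  rw [hFe] at hmap hP'
  rw [hpre] at hP'
  have htail : ∀ q ∈ affineSpan ℝ P, ∀ i : Fin d, l ≤ (i : ℕ) → F (q - v₀) i = 0 := by
    intro q hq
    have : F (q - v₀) ∈ {y : Fin d → ℝ | ∀ i : Fin d, l ≤ (i : ℕ) → y i = 0} := by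
      rw [← hmap]
      exact ⟨_, ⟨q, hq, rfl⟩, rfl⟩
    exact this
  have hPc : IsCompact P := hPV ▸ V.finite_toSet.isCompact_convexHull ℝ
  have hPconv : Convex ℝ P := hPV ▸ convex_convexHull ℝ _
  have hKc : IsCompact P' := by
    rw [hP']
    exact ((hPc.image (by fun_prop)).image F.continuous_of_finiteDimensional).image
      pr.continuous_of_finiteDimensional
  have hKconv : Convex ℝ P' := by
    rw [hP']
    refine Convex.linear_image (Convex.linear_image ?_ F) pr
    simpa [sub_eq_add_neg, add_comm] using hPconv.translate (-v₀)
  obtain ⟨N, hN, hcore⟩ := core_count P' hKc hKconv ε hε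
  refine ⟨N, hN, fun v s hs hx => ?_⟩
  have hs0 : 0 < s := hN.trans hs
  obtain ⟨x, hxa, hxl⟩ := hx
  obtain ⟨q, hq, hxq⟩ := affine_aux P v s x hxa
  set u : Fin l → ℝ := - (s • pr (F (q - v₀))) with hu
  let ex : (Fin l → ℤ) → (Fin d → ℝ) := fun z i => if h : (i : ℕ) < l then (z ⟨i, h⟩ : ℝ) else 0
  have hexl : ∀ z, ex z ∈ latticePts d := by
    intro z i
    by_cases h : (i : ℕ) < l
    · exact ⟨z ⟨i, h⟩, by simp [ex, h]⟩
    · exact ⟨0, by simp [ex, h]⟩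
  have hprex : ∀ z i, pr (ex z) i = z i := by
    intro z i
    simp [pr, ex, LinearMap.funLeft]
  have hext : ∀ y y' : Fin d → ℝ, (∀ i : Fin d, l ≤ (i : ℕ) → y i = 0) →
      (∀ i : Fin d, l ≤ (i : ℕ) → y' i = 0) → pr y = pr y' → y = y' := by
    intro y y' h h' e
    funext i
    by_cases hi : (i : ℕ) < l
    · exact congrFun e ⟨i, hi⟩
    · rw [h i (not_lt.1 hi), h' i (not_lt.1 hi)]
  have hextail : ∀ z, ∀ i : Fin d, l ≤ (i : ℕ) → ex z i = 0 := by
    intro z i hi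
    simp [ex, not_lt.2 hi]
  have hzu : ∀ z : Fin l → ℤ, (fun i => ((z i : ℝ) - u i) / s)
      = pr (s⁻¹ • ex z + F (q - v₀)) := by
    intro z
    funext i
    rw [map_add, map_smul, Pi.add_apply, Pi.smul_apply, hprex, hu]
    simp only [Pi.neg_apply, Pi.smul_apply, smul_eq_mul]
    field_simp
    ring
  let g : (Fin l → ℤ) → (Fin d → ℝ) := fun z => x + G (ex z)
  have hginj : Function.Injective g := by
    intro z w h
    have h1 : G (ex z) = G (ex w) := add_left_cancel h
    have h2 : ex z = ex w := by rw [← hFG (ex z), h1, hFG]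
    funext i
    have := hprex z i
    rw [h2, hprex] at this
    exact_mod_cast this.symm
  have hset : (s • translateSet P v) ∩ latticePts d
      = g '' {z : Fin l → ℤ | (fun i => ((z i : ℝ) - u i) / s) ∈ P'} := by
    ext y
    constructor
    · rintro ⟨⟨_, ⟨p, hp, rfl⟩, rfl⟩, hyl⟩
      have hw := lattice_mulVec_aux A _ (lattice_sub_aux _ _ hyl hxl)
      rw [← hF] at hw
      have hyx : F (s • (p + v) - x) = s • (F (p - v₀) - F (q - v₀)) := by
        rw [← map_sub, ← map_smul, hxq]
        congr 1
        module
      choose m hm using hw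
      let z : Fin l → ℤ := fun i => m (Fin.castLE hl i)
      have hez : ex z = F (s • (p + v) - x) := by
        refine hext _ _ (hextail z) ?_ ?_
        · intro i hi
          rw [hyx]
          simp [-map_sub, htail q hq i hi, htail p (subset_affineSpan ℝ P hp) i hi]
        · funext i
          rw [hprex]
          exact (hm (Fin.castLE hl i)).symm
      refine ⟨z, ?_, ?_⟩
      · rw [mem_ofPred_eq, hzu, hez, hyx, hP', smul_smul, inv_mul_cancel₀ hs0.ne', one_smul,
          sub_add_cancel]
        exact ⟨_, ⟨_, ⟨p, hp, rfl⟩, rfl⟩, rfl⟩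
      · change x + G (ex z) = s • (p + v)
        rw [hez, hGF]
        abel
    · rintro ⟨z, hz, rfl⟩
      refine ⟨?_, lattice_add_aux _ _ hxl (lattice_mulVec_aux A⁻¹ _ (hexl z))⟩
      rw [mem_ofPred_eq, hzu, hP'] at hz
      obtain ⟨_, ⟨_, ⟨p, hp, rfl⟩, rfl⟩, hpz⟩ := hz
      have h1 := hext _ _ (htail p (subset_affineSpan ℝ P hp)) (fun i hi => by
        simp [-map_sub, htail q hq i hi, hextail z i hi]) hpz
      have h2 : p - v₀ = s⁻¹ • G (ex z) + (q - v₀) := by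
        have := congrArg G h1
        rwa [map_add, map_smul, hGF, hGF] at this
      have h3 : p = s⁻¹ • G (ex z) + q := by
        have := congrArg (· + v₀) h2
        simpa [add_assoc] using this
      refine ⟨p + v, ⟨p, hp, rfl⟩, ?_⟩
      change s • (p + v) = x + G (ex z)
      rw [h3, hxq, smul_add, smul_add, smul_smul, mul_inv_cancel₀ hs0.ne', one_smul]
      module
  have hcard : ehrhart (translateSet P v) s
      = {z : Fin l → ℤ | (fun i => ((z i : ℝ) - u i) / s) ∈ P'}.ncard := by
    rw [ehrhart, hset, ncard_image_of_injective _ hginj]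
  rw [hcard]
  exact hcore u s hs
end

section
/- Let (s_l)_{l≥1} be a sequence of real numbers none of which is an integer, such that the fractional parts {s_l} tend to 0 as l → ∞, and let (k_l)_{l≥1} be a sequence of pairwise distinct integers. Suppose b, b' ∈ ℝ are such that for every l there exist integers m_l and m'_l with s_l·(b + k_l) = m_l and s_l·(b' + k_l) = m'_l. Then b = b'. (That is, the infinite system of equations s_l·(b + k_l) ∈ ℤ has at most one real solution b.) -/
open Set MeasureTheory Pointwise

/-- the infinite system of pseudo-Diophantine equations
`s_l (b + k_l) ∈ ℤ` has at most one real solution `b`. -/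
theorem stmt11 (s : ℕ → ℝ) (k : ℕ → ℤ)
    (hs : ∀ l, ¬ ∃ m : ℤ, s l = (m : ℝ))
    (hfract : Filter.Tendsto (fun l => Int.fract (s l)) Filter.atTop (nhds 0))
    (hk : Function.Injective k)
    (b b' : ℝ)
    (hb : ∀ l, ∃ m : ℤ, s l * (b + (k l : ℝ)) = (m : ℝ))
    (hb' : ∀ l, ∃ m : ℤ, s l * (b' + (k l : ℝ)) = (m : ℝ)) :
    b = b' := by
  by_contra hne
  have hd : b - b' ≠ 0 := sub_ne_zero.mpr hne
  have hs0 : ∀ l, s l ≠ 0 := fun l h => hs l ⟨0, by simpa using h⟩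
  choose m hm using hb
  choose m' hm' using hb'
  have hp : ∀ l, s l * (b - b') = ((m l - m' l : ℤ) : ℝ) := by
    intro l
    push_cast
    rw [← hm, ← hm']
    ring
  have hp0 : ∀ l, ((m l - m' l : ℤ) : ℝ) ≠ 0 := by
    intro l
    rw [← hp]
    exact mul_ne_zero (hs0 l) hd
  have hkk : k 0 - k 1 ≠ 0 := sub_ne_zero.mpr (fun h => by simpa using hk h)
  generalize hpdef : (fun l => m l - m' l) = p at *
  have e : ∀ l, m l - m' l = p l := fun l => congrFun hpdef l
  simp only [e] at hp hp0
  have key : ∀ l, (p l : ℝ) * (b + k l) = m l * (b - b') := by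
    intro l
    rw [← hp, ← hm]
    ring
  obtain ⟨B, hB⟩ : ∃ B : ℤ, B = (k 0 - k 1) * p 0 * p 1 := ⟨_, rfl⟩
  obtain ⟨A, hA⟩ : ∃ A : ℤ, A = m 0 * p 1 - m 1 * p 0 := ⟨_, rfl⟩
  have hAB : (b - b') * (A : ℝ) = B := by
    rw [hA, hB]
    push_cast
    linear_combination (-(p 1 : ℝ)) * key 0 + (p 0 : ℝ) * key 1
  have hB0 : B ≠ 0 := by
    rw [hB]
    exact mul_ne_zero (mul_ne_zero hkk (by exact_mod_cast hp0 0)) (by exact_mod_cast hp0 1)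
  have hBpos : (0 : ℝ) < |(B : ℝ)| := abs_pos.mpr (by exact_mod_cast hB0)
  have hev := hfract.eventually (gt_mem_nhds (inv_pos.mpr hBpos))
  obtain ⟨l, hl⟩ := hev.exists
  have hf0 : Int.fract (s l) ≠ 0 := by
    intro h
    refine hs l ⟨⌊s l⌋, ?_⟩
    have := Int.self_sub_floor (s l)
    linarith
  have hint : Int.fract (s l) * B = ((p l * A - ⌊s l⌋ * B : ℤ) : ℝ) := by
    push_cast
    rw [← Int.self_sub_floor]
    linear_combination (A : ℝ) * hp l - (s l) * hAB
  have hne0 : (p l * A - ⌊s l⌋ * B : ℤ) ≠ 0 := by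
    intro h
    rw [h] at hint
    have : Int.fract (s l) * (B : ℝ) ≠ 0 := mul_ne_zero hf0 (by exact_mod_cast hB0)
    exact this (by simpa using hint)
  have h1 : (1 : ℝ) ≤ |Int.fract (s l) * B| := by
    rw [hint]
    exact_mod_cast Int.one_le_abs hne0
  rw [abs_mul, abs_of_nonneg (Int.fract_nonneg _)] at h1
  have h2 := mul_lt_mul_of_pos_right hl hBpos
  rw [inv_mul_cancel₀ hBpos.ne'] at h2
  linarith
end

section
/- Let a_1, …, a_n ∈ ℤ^d be primitive integer vectors. Suppose b_1, …, b_n and c_1, …, c_n are real numbers such that P = ⋂_{i=1}^n {x ∈ ℝ^d : ⟨a_i, x⟩ ≤ b_i} and Q = ⋂_{i=1}^n {x ∈ ℝ^d : ⟨a_i, x⟩ ≤ c_i} are both compact with nonempty interior, that for every i one has b_i = max_{x∈P} ⟨a_i, x⟩ and c_i = max_{x∈Q} ⟨a_i, x⟩ (so each hyperplane {x : ⟨a_i, x⟩ = b_i} supports P and each {x : ⟨a_i, x⟩ = c_i} supports Q, i.e. each set F_i = P ∩ {x : ⟨a_i, x⟩ = b_i} is a nonempty face), and that L_{P+w}(s)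 = L_{Q+w}(s) for every w ∈ ℤ^d and every real s > 0. Then b_i = c_i for all i; in particular P = Q. -/
open Set MeasureTheory Pointwise

theorem aux_dense (t : ℝ) (ht : Irrational t) (u ε : ℝ) (hε : 0 < ε) :
    ∃ m w : ℤ, |t * m - w - u| < ε := by
  have h : Dense (AddSubgroup.closure {t, 1} : Set ℝ) := by
    rw [dense_addSubgroupClosure_pair_iff]; simpa using ht
  obtain ⟨y, hy, hyd⟩ := h.exists_dist_lt u hε
  obtain ⟨m, k, rfl⟩ := AddSubgroup.mem_closure_pair.1 hy
  refine ⟨m, -k, ?_⟩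
  rw [dist_comm, Real.dist_eq] at hyd
  convert hyd using 2
  simp; ring

theorem aux_inter {d : ℕ} (Q : Set (Fin d → ℝ)) (t R : ℝ) (htR : 2 * R < t) (ht : 0 < t)
    (hQ : ∀ x ∈ Q, ‖x‖ ≤ R) (m w : Fin d → ℤ) (y : Fin d → ℝ) (hy : ‖y‖ ≤ R)
    (hyd : ∀ i, y i = t * m i - w i) (z : Fin d → ℝ)
    (hz : z ∈ (t⁻¹ • translateSet Q (fun i => (w i : ℝ))) ∩ latticePts d) :
    y ∈ Q ∧ z = fun i => (m i : ℝ) := by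
  obtain ⟨⟨_, ⟨q, hq, rfl⟩, rfl⟩, hl⟩ := hz
  have key : ∀ i, q i = y i := by
    intro i
    obtain ⟨k, hk⟩ := hl i
    have hk' : q i = t * k - w i := by
      simp at hk
      field_simp at hk
      linarith
    have h1 : |q i| ≤ R := (norm_le_pi_norm q i).trans (hQ q hq)
    have h2 : |y i| ≤ R := (norm_le_pi_norm y i).trans hy
    rw [abs_le] at h1 h2
    have h3 : t * ((k : ℝ) - m i) < t * 1 := by linarith [hyd i]
    have h4 : t * (-1) < t * ((k : ℝ) - m i) := by linarith [hyd i]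
    have h5 := lt_of_mul_lt_mul_left h3 ht.le
    have h6 := lt_of_mul_lt_mul_left h4 ht.le
    have h7 : k - m i < 1 := by exact_mod_cast h5
    have h8 : -1 < k - m i := by exact_mod_cast h6
    have : k = m i := by omega
    rw [hk', hyd i, this]
  have hqy : q = y := funext key
  subst hqy
  refine ⟨hq, ?_⟩
  funext i
  simp [hyd i]
  field_simp

theorem aux_subset {d : ℕ} (P Q : Set (Fin d → ℝ)) (hPconv : Convex ℝ P)
    (hPc : IsCompact P) (hPi : (interior P).Nonempty) (hQc : IsCompact Q)
    (hehr : ∀ (w : Fin d → ℤ) (s : ℝ), 0 < s →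
      ehrhart (translateSet P (fun i => (w i : ℝ))) s =
      ehrhart (translateSet Q (fun i => (w i : ℝ))) s) : P ⊆ Q := by
  have hint : interior P ⊆ Q := by
    by_contra hcon
    obtain ⟨u, huP, huQ⟩ := Set.not_subset.1 hcon
    have hU : IsOpen (interior P ∩ Qᶜ) := isOpen_interior.inter hQc.isClosed.isOpen_compl
    obtain ⟨ε, hε, hball⟩ := Metric.isOpen_iff.1 hU u ⟨huP, huQ⟩
    obtain ⟨R, hR⟩ := (hPc.union hQc).isBounded.exists_norm_le
    obtain ⟨N, hN⟩ := exists_nat_gt (2 * R)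
    have htirr : Irrational (√2 + N) := irrational_sqrt_two.add_natCast N
    have hs2 : 0 < √2 := by positivity
    have ht : 0 < √2 + N := by positivity
    have htR : 2 * R < √2 + N := by linarith
    generalize √2 + (N : ℝ) = t at htirr ht htR
    choose m w hmw using fun i => aux_dense t htirr (u i) ε hε
    let y : Fin d → ℝ := fun i => t * m i - w i
    have hyU : y ∈ interior P ∩ Qᶜ := by
      apply hball
      rw [Metric.mem_ball, dist_pi_lt_iff hε]
      intro i
      rw [Real.dist_eq]
      exact hmw i
    have hyP : y ∈ P := interior_subset hyU.1
    have hyR : ‖y‖ ≤ R := hR y (Or.inl hyP)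
    have h := hehr w t⁻¹ (by positivity)
    have e1 : (t⁻¹ • translateSet P (fun i => (w i : ℝ))) ∩ latticePts d
        = {fun i => (m i : ℝ)} := by
      apply Set.Subset.antisymm
      · intro z hz
        exact (aux_inter P t R htR ht (fun x hx => hR x (Or.inl hx)) m w y hyR
          (fun i => rfl) z hz).2
      · rintro _ rfl
        refine ⟨⟨_, ⟨y, hyP, rfl⟩, ?_⟩, fun i => ⟨m i, rfl⟩⟩
        funext i
        simp [y]
        field_simp
    have e2 : (t⁻¹ • translateSet Q (fun i => (w i : ℝ))) ∩ latticePts d = ∅ := by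
      apply Set.eq_empty_of_forall_notMem
      intro z hz
      exact hyU.2 (aux_inter Q t R htR ht (fun x hx => hR x (Or.inr hx)) m w y hyR
          (fun i => rfl) z hz).1
    rw [ehrhart, ehrhart, e1, e2] at h
    simp at h
  calc P ⊆ closure P := subset_closure
    _ = closure (interior P) :=
      (hPconv.closure_interior_eq_closure_of_nonempty_interior hPi).symm
    _ ⊆ Q := closure_minimal hint hQc.isClosed

theorem aux_convex {d n : ℕ} (a : Fin n → Fin d → ℤ) (b : Fin n → ℝ) :
    Convex ℝ (⋂ i, {x : Fin d → ℝ | dotProd (fun j => (a i j : ℝ)) x ≤ b i}) := by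
  refine convex_iInter fun i => convex_halfSpace_le ⟨?_, ?_⟩ _
  · intro x y
    simp [dotProd, mul_add, Finset.sum_add_distrib]
  · intro k x
    simp only [dotProd, Pi.smul_apply, smul_eq_mul, Finset.mul_sum]
    exact Finset.sum_congr rfl fun _ _ => by ring

/-- recovering the right-hand sides of the supporting half-spaces of a
full-dimensional semi-rational polytope from the Ehrhart functions of its integer
translates. -/
theorem stmt12 {d n : ℕ} (a : Fin n → Fin d → ℤ)
    (hprim : ∀ i, Finset.univ.gcd (a i) = 1)
    (b c : Fin n → ℝ) (P Q : Set (Fin d → ℝ))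
    (hPdef : P = ⋂ i, {x : Fin d → ℝ | dotProd (fun j => (a i j : ℝ)) x ≤ b i})
    (hQdef : Q = ⋂ i, {x : Fin d → ℝ | dotProd (fun j => (a i j : ℝ)) x ≤ c i})
    (hPc : IsCompact P) (hPi : (interior P).Nonempty)
    (hQc : IsCompact Q) (hQi : (interior Q).Nonempty)
    (hbmax : ∀ i, IsGreatest ((fun x => dotProd (fun j => (a i j : ℝ)) x) '' P) (b i))
    (hcmax : ∀ i, IsGreatest ((fun x => dotProd (fun j => (a i j : ℝ)) x) '' Q) (c i))
    (hehr : ∀ (w : Fin d → ℤ) (s : ℝ), 0 < s →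
      ehrhart (translateSet P (fun i => (w i : ℝ))) s =
      ehrhart (translateSet Q (fun i => (w i : ℝ))) s) :
    (∀ i, b i = c i) ∧ P = Q := by
  have hPQ : P = Q := by
    apply Set.Subset.antisymm
    · exact aux_subset P Q (hPdef ▸ aux_convex a b) hPc hPi hQc hehr
    · exact aux_subset Q P (hQdef ▸ aux_convex a c) hQc hQi hPc
        (fun w s hs => (hehr w s hs).symm)
  refine ⟨fun i => ?_, hPQ⟩
  subst hPQ
  exact (hbmax i).unique (hcmax i)
end

section
/- Let P and Q be full-dimensional semi-rational polytopes in ℝ^d such that L_{P+w}(s) = L_{Q+w}(s) for every integer vector w ∈ ℤ^d and every real s > 0. Then P = Q. -/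
open Set MeasureTheory Pointwise

theorem aux_mem_s13 {d : ℕ} (A : Set (Fin d → ℝ)) (r : ℝ) (hr : 0 < r) (w y : Fin d → ℝ) :
    y ∈ r⁻¹ • translateSet A w ↔ r • y - w ∈ A := by
  rw [Set.mem_inv_smul_set_iff₀ hr.ne']
  unfold translateSet
  constructor
  · rintro ⟨x, hx, hxy⟩
    have : r • y - w = x := by rw [← hxy]; simp
    rwa [this]
  · intro h
    exact ⟨_, h, by simp⟩

theorem aux_sub {d : ℕ} (A B : Set (Fin d → ℝ)) (R r : ℝ) (hA : ∀ x ∈ A, ∀ i, |x i| ≤ R)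
    (hB : ∀ x ∈ B, ∀ i, |x i| ≤ R) (hr : Irrational r) (hr0 : 0 < r) (hrR : 2 * R < r)
    (hBc : IsClosed B)
    (h : ∀ (w : Fin d → ℤ) (s : ℝ), 0 < s →
      ehrhart (translateSet A (fun i => (w i : ℝ))) s =
      ehrhart (translateSet B (fun i => (w i : ℝ))) s) : interior A ⊆ B := by
  intro x hx
  by_contra hxB
  have hopen : IsOpen (interior A ∩ Bᶜ) := isOpen_interior.inter hBc.isOpen_compl
  obtain ⟨ε, hε, hball⟩ := Metric.isOpen_iff.1 hopen x ⟨hx, hxB⟩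
  have hd : Dense (AddSubgroup.closure {r, 1} : Set ℝ) :=
    dense_addSubgroupClosure_pair_iff.2 (by simpa using hr)
  have key : ∀ i, ∃ n m : ℤ, |x i - (n * r + m)| < ε := by
    intro i
    obtain ⟨z, hz, hzd⟩ := hd.exists_dist_lt (x i) hε
    obtain ⟨n, m, rfl⟩ := AddSubgroup.mem_closure_pair.1 hz
    exact ⟨n, m, by simpa [Real.dist_eq] using hzd⟩
  choose n m hnm using key
  set w : Fin d → ℤ := fun i => -m i with hw
  set y : Fin d → ℝ := fun i => (n i : ℝ) with hy
  have hx' : r • y - (fun i => (w i : ℝ)) ∈ interior A ∩ Bᶜ := by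
    apply hball
    rw [Metric.mem_ball, dist_comm, dist_pi_lt_iff hε]
    intro i
    have := hnm i
    rw [Real.dist_eq]
    convert this using 2
    simp [hw, hy]
    ring
  have hxA := interior_subset hx'.1
  have hub : ∀ C : Set (Fin d → ℝ), (∀ x ∈ C, ∀ i, |x i| ≤ R) →
      ∀ z ∈ (r⁻¹ • translateSet C (fun i => (w i : ℝ))) ∩ latticePts d, z = y := by
    rintro C hC z ⟨hz, hzl⟩
    rw [aux_mem_s13 _ _ hr0] at hz
    funext i
    obtain ⟨k, hk⟩ := hzl i
    have h1 := abs_le.1 (hC _ hz i)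
    have h2 := abs_le.1 (hA _ hxA i)
    simp only [Pi.sub_apply, Pi.smul_apply, smul_eq_mul, hk, hy] at h1 h2
    rw [hk]
    have h3 : (k : ℝ) - n i < 1 := by
      by_contra hc
      nlinarith
    have h4 : (n i : ℝ) - k < 1 := by
      by_contra hc
      nlinarith
    have h5 : k - n i < 1 := by exact_mod_cast h3
    have h6 : n i - k < 1 := by exact_mod_cast h4
    have : k = n i := by omega
    simp [hy, this]
  have e := h w r⁻¹ (inv_pos.2 hr0)
  have eA : (r⁻¹ • translateSet A (fun i => (w i : ℝ))) ∩ latticePts d = {y} := by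
    apply Set.eq_singleton_iff_unique_mem.2
    exact ⟨⟨(aux_mem_s13 _ _ hr0 _ _).2 hxA, fun i => ⟨n i, rfl⟩⟩, hub A hA⟩
  have eB : (r⁻¹ • translateSet B (fun i => (w i : ℝ))) ∩ latticePts d = ∅ := by
    apply Set.eq_empty_of_forall_notMem
    intro z hz
    have := hub B hB z hz
    subst this
    exact hx'.2 ((aux_mem_s13 _ _ hr0 _ _).1 hz.1)
  unfold ehrhart at e
  rw [eA, eB] at e
  simp at e

theorem aux_poly {d : ℕ} (P : Set (Fin d → ℝ)) (hP : IsPolytope P) :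
    IsCompact P ∧ Convex ℝ P ∧ ∃ R : ℝ, ∀ x ∈ P, ∀ i, |x i| ≤ R := by
  obtain ⟨V, -, rfl⟩ := hP
  have hc : IsCompact (convexHull ℝ (V : Set (Fin d → ℝ))) :=
    V.finite_toSet.isCompact_convexHull ℝ
  refine ⟨hc, convex_convexHull ℝ _, ?_⟩
  obtain ⟨R, hR⟩ := hc.isBounded.exists_norm_le
  exact ⟨R, fun x hx i => (norm_le_pi_norm x i).trans (hR x hx)⟩

/-- two full-dimensional semi-rational polytopes with the same real
Ehrhart functions on all integer translates are equal. -/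
theorem stmt13 {d : ℕ} (P Q : Set (Fin d → ℝ))
    (hP : IsSemiRationalPolytope P) (hQ : IsSemiRationalPolytope Q)
    (hPfull : (interior P).Nonempty) (hQfull : (interior Q).Nonempty)
    (h : ∀ (w : Fin d → ℤ) (s : ℝ), 0 < s →
      ehrhart (translateSet P (fun i => (w i : ℝ))) s =
      ehrhart (translateSet Q (fun i => (w i : ℝ))) s) :
    P = Q := by
  obtain ⟨cP, vP, R₁, hR₁⟩ := aux_poly P hP.1
  obtain ⟨cQ, vQ, R₂, hR₂⟩ := aux_poly Q hQ.1
  obtain ⟨r, hr, hr1, -⟩ := exists_irrational_btwn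
    (lt_add_one (max 0 (2 * max R₁ R₂)))
  have hr0 : 0 < r := (le_max_left _ _).trans_lt hr1
  have hrR : 2 * max R₁ R₂ < r := (le_max_right _ _).trans_lt hr1
  have bP : ∀ x ∈ P, ∀ i, |x i| ≤ max R₁ R₂ := fun x hx i => (hR₁ x hx i).trans (le_max_left _ _)
  have bQ : ∀ x ∈ Q, ∀ i, |x i| ≤ max R₁ R₂ := fun x hx i => (hR₂ x hx i).trans (le_max_right _ _)
  have h1 := aux_sub P Q _ r bP bQ hr hr0 hrR cQ.isClosed h
  have h2 := aux_sub Q P _ r bQ bP hr hr0 hrR cP.isClosed (fun w s hs => (h w s hs).symm)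
  apply Set.Subset.antisymm
  · have := vP.closure_interior_eq_closure_of_nonempty_interior hPfull
    rw [cP.isClosed.closure_eq] at this
    rw [← this]
    exact closure_minimal h1 cQ.isClosed
  · have := vQ.closure_interior_eq_closure_of_nonempty_interior hQfull
    rw [cQ.isClosed.closure_eq] at this
    rw [← this]
    exact closure_minimal h2 cP.isClosed
end

section
/- Let P and Q be full-dimensional semi-rational polytopes in ℝ^d and let D ⊆ (0, ∞) be a dense subset of (0, ∞). Suppose L_{P+w}(s) = L_{Q+w}(s) for every integer vector w ∈ ℤ^d and every s ∈ D. Then P = Q. -/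
open Set MeasureTheory Pointwise

lemma mem_dil {d : ℕ} (P : Set (Fin d → ℝ)) (w : Fin d → ℝ) (s : ℝ) (hs : 0 < s)
    (y : Fin d → ℝ) : y ∈ s • translateSet P w ↔ (fun i => y i / s - w i) ∈ P := by
  rw [Set.mem_smul_set_iff_inv_smul_mem₀ hs.ne']
  constructor
  · rintro ⟨x, hx, hxy⟩
    convert hx using 1
    funext i
    have := congrFun hxy i
    simp only [Pi.add_apply, Pi.smul_apply, smul_eq_mul] at this
    rw [div_eq_inv_mul, ← this]; ring
  · intro hx
    refine ⟨_, hx, ?_⟩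
    funext i
    simp only [Pi.add_apply, Pi.smul_apply, smul_eq_mul]
    rw [div_eq_inv_mul]; ring

lemma aux_subset_s16 {d : ℕ} (P Q : Set (Fin d → ℝ)) (hc : Convex ℝ P)
    (hPf : (interior P).Nonempty) (hQ : IsClosed Q)
    (R : ℝ) (hR : 0 < R) (hPR : ∀ x ∈ P, ∀ i, |x i| ≤ R) (hQR : ∀ x ∈ Q, ∀ i, |x i| ≤ R)
    (D : Set ℝ) (hDdense : Set.Ioi (0 : ℝ) ⊆ closure D)
    (h : ∀ (w : Fin d → ℤ), ∀ s ∈ D,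
      ehrhart (translateSet P (fun i => (w i : ℝ))) s =
      ehrhart (translateSet Q (fun i => (w i : ℝ))) s) : P ⊆ Q := by
  suffices hi : interior P ⊆ Q by
    calc P ⊆ closure P := subset_closure
      _ = closure (interior P) := (hc.closure_interior_eq_closure_of_nonempty_interior hPf).symm
      _ ⊆ Q := closure_minimal hi hQ
  by_contra hne
  obtain ⟨x, hxP, hxQ⟩ := Set.not_subset.1 hne
  have hU : IsOpen (interior P ∩ Qᶜ) := isOpen_interior.inter hQ.isOpen_compl
  obtain ⟨ε, hε, hball⟩ := Metric.isOpen_iff.1 hU x ⟨hxP, hxQ⟩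
  obtain ⟨n, hn⟩ := exists_nat_one_div_lt hε
  obtain ⟨K, hK⟩ := exists_nat_gt (2 * R)
  set N : ℝ := (n : ℝ) + 1 with hN
  have hN0 : 0 < N := by positivity
  set m : Fin d → ℤ := fun i => ⌊N * x i⌋ with hm
  set w : Fin d → ℤ := fun i => m i * K with hw
  have hK0 : (0 : ℝ) < K := by linarith
  set s0 : ℝ := ((K : ℝ) + 1 / N)⁻¹ with hs0
  have hs0p : 0 < s0 := by positivity
  have h1 : (fun i => (m i : ℝ) / s0 - (w i : ℝ)) ∈ interior P ∩ Qᶜ := by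
    apply hball
    rw [Metric.mem_ball, dist_pi_lt_iff hε]
    intro i
    have e : (m i : ℝ) / s0 - (w i : ℝ) = m i / N := by
      simp only [hs0, hw, div_inv_eq_mul]; push_cast; ring
    rw [e, Real.dist_eq]
    refine lt_of_le_of_lt ?_ hn
    have e1 := Int.floor_le (N * x i)
    have e2 := Int.lt_floor_add_one (N * x i)
    have e3 : (m i : ℝ) / N - x i = (m i - N * x i) / N := by field_simp
    rw [e3, abs_div, abs_of_pos hN0]
    apply div_le_div_of_nonneg_right _ hN0.le
    rw [abs_le]
    constructor <;> simp only [hm] <;> linarith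
  have hcont : ContinuousAt (fun s : ℝ => (fun i => (m i : ℝ) / s - (w i : ℝ))) s0 := by
    rw [continuousAt_pi]
    intro i
    exact (continuousAt_const.div continuousAt_id hs0p.ne').sub continuousAt_const
  have ev1 := hcont.eventually (hU.mem_nhds h1)
  have hs0lt : s0 < 1 / (2 * R) := by
    rw [hs0, ← one_div]
    apply one_div_lt_one_div_of_lt (by positivity)
    have : 0 < 1 / N := by positivity
    linarith
  have ev2 := eventually_lt_nhds hs0lt
  have ev3 := eventually_gt_nhds hs0p
  have hfr := mem_closure_iff_frequently.1 (hDdense (show s0 ∈ Set.Ioi (0:ℝ) from hs0p))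
  obtain ⟨s, hsD, ⟨hsU, hs2⟩, hs3⟩ := (hfr.and_eventually ((ev1.and ev2).and ev3)).exists
  have hmP := interior_subset hsU.1
  have hmQ := hsU.2
  have key : ∀ y ∈ latticePts d, (∀ i, |y i / s - w i| ≤ R) → y = fun i => (m i : ℝ) := by
    intro y hy hyR
    funext i
    obtain ⟨k, hk⟩ := hy i
    rw [hk]
    have a1 := hyR i
    have a2 := hPR _ hmP i
    rw [hk] at a1
    have a3 : |(k : ℝ) / s - m i / s| ≤ 2 * R := by
      rw [abs_le] at *
      constructor <;> linarith
    rw [← sub_div, abs_div, abs_of_pos hs3, div_le_iff₀ hs3] at a3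
    have a4 : s * (2 * R) < 1 := by rwa [lt_div_iff₀ (by positivity)] at hs2
    have a5 : |((k - m i : ℤ) : ℝ)| < 1 := by push_cast; linarith
    have a6 : |k - m i| < 1 := by exact_mod_cast a5
    have := Int.abs_lt_one_iff.1 a6
    have : k = m i := by omega
    rw [this]
  have hh := h w s hsD
  have cP : (s • translateSet P (fun i => (w i : ℝ))) ∩ latticePts d = {fun i => (m i : ℝ)} := by
    ext y
    rw [Set.mem_inter_iff, mem_dil _ _ _ hs3, Set.mem_singleton_iff]
    constructor
    · rintro ⟨ha, hb⟩
      exact key y hb (hPR _ ha)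
    · rintro rfl
      exact ⟨hmP, fun i => ⟨m i, rfl⟩⟩
  have cQ : (s • translateSet Q (fun i => (w i : ℝ))) ∩ latticePts d = ∅ := by
    ext y
    rw [Set.mem_inter_iff, mem_dil _ _ _ hs3]
    constructor
    · rintro ⟨ha, hb⟩
      have := key y hb (hQR _ ha)
      subst this
      exact hmQ ha
    · rintro ⟨⟩
  unfold ehrhart at hh
  rw [cP, cQ, Set.ncard_singleton, Set.ncard_empty] at hh
  exact one_ne_zero hh

lemma polytope_props {d : ℕ} {P : Set (Fin d → ℝ)} (hP : IsPolytope P) :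
    Convex ℝ P ∧ IsCompact P := by
  obtain ⟨V, -, rfl⟩ := hP
  exact ⟨convex_convexHull _ _, V.finite_toSet.isCompact_convexHull (𝕜 := ℝ)⟩

lemma compact_bd {d : ℕ} {P : Set (Fin d → ℝ)} (hP : IsCompact P) :
    ∃ R : ℝ, ∀ x ∈ P, ∀ i, |x i| ≤ R := by
  obtain ⟨R, hR⟩ := hP.isBounded.exists_norm_le
  exact ⟨R, fun x hx i => (norm_le_pi_norm x i).trans (hR x hx)⟩

/-- two full-dimensional semi-rational polytopes whose Ehrhart functions
agree on all integer translates for a dense set of positive dilation parameters are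
equal. -/
theorem stmt16 {d : ℕ} (P Q : Set (Fin d → ℝ))
    (hP : IsSemiRationalPolytope P) (hQ : IsSemiRationalPolytope Q)
    (hPfull : (interior P).Nonempty) (hQfull : (interior Q).Nonempty)
    (D : Set ℝ) (hD : D ⊆ Set.Ioi (0 : ℝ)) (hDdense : Set.Ioi (0 : ℝ) ⊆ closure D)
    (h : ∀ (w : Fin d → ℤ), ∀ s ∈ D,
      ehrhart (translateSet P (fun i => (w i : ℝ))) s =
      ehrhart (translateSet Q (fun i => (w i : ℝ))) s) :
    P = Q := by
  obtain ⟨cP, kP⟩ := polytope_props hP.1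
  obtain ⟨cQ, kQ⟩ := polytope_props hQ.1
  obtain ⟨R1, h1⟩ := compact_bd kP
  obtain ⟨R2, h2⟩ := compact_bd kQ
  have hR : 0 < max (max R1 R2) 1 := lt_of_lt_of_le one_pos (le_max_right _ _)
  have b1 : ∀ x ∈ P, ∀ i, |x i| ≤ max (max R1 R2) 1 := fun x hx i =>
    (h1 x hx i).trans ((le_max_left _ _).trans (le_max_left _ _))
  have b2 : ∀ x ∈ Q, ∀ i, |x i| ≤ max (max R1 R2) 1 := fun x hx i =>
    (h2 x hx i).trans ((le_max_right _ _).trans (le_max_left _ _))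
  exact Set.Subset.antisymm
    (aux_subset_s16 P Q cP hPfull kQ.isClosed _ hR b1 b2 D hDdense h)
    (aux_subset_s16 Q P cQ hQfull kP.isClosed _ hR b2 b1 D hDdense (fun w s hs => (h w s hs).symm))
end

section
/- For all integers w₁, w₂ and every real s > 0, there do not exist integers x₁, x₂ with x₁ = s·(ln 2 + w₁) and x₂ = s·(ln 3 + w₂). Consequently, for d ≥ 2 and M = {x ∈ ℝ^d : x₁ = ln 2, x₂ = ln 3}, the set s•(M + w) contains no point of ℤ^d for any integer vector w ∈ ℤ^d and any real s > 0. -/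
open Set MeasureTheory Pointwise

open Polynomial in
lemma exp_int_irrat (N : ℤ) (hN : N ≠ 0) (a b : ℤ) (ha : a ≠ 0) (hb : b ≠ 0) :
    (b : ℝ) * Real.exp N ≠ a := by
  intro h
  obtain ⟨c, hc⟩ := LindemannWeierstrass.exp_polynomial_approx (X - C N : ℤ[X]) (by simpa using hN)
  have ht : Filter.Tendsto (fun k : ℕ => |(b : ℝ)| * (c * (c ^ k / (k.factorial : ℝ))))
      Filter.atTop (nhds 0) := by
    simpa using ((FloorSemiring.tendsto_pow_div_factorial_atTop c).const_mul c).const_mul |(b : ℝ)|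
  obtain ⟨K, hK⟩ := Filter.eventually_atTop.1 (ht.eventually_lt_const one_pos)
  obtain ⟨p, hp, pp⟩ := Nat.exists_infinite_primes (K + N.natAbs + a.natAbs + 2)
  obtain ⟨n, hn, g, -, hg⟩ := hc p (by simp; omega) pp
  have hr : (N : ℂ) ∈ (X - C N : ℤ[X]).aroots ℂ := by
    rw [mem_aroots]
    exact ⟨X_sub_C_ne_zero N, by simp⟩
  have h1 := hg hr
  have h2 : (aeval (N : ℂ) g : ℂ) = ((g.eval N : ℤ) : ℂ) := by
    have := Polynomial.aeval_algebraMap_apply ℂ N g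
    simpa using this
  have hC : (b : ℂ) * Complex.exp N = a := by simpa using congrArg Complex.ofReal h
  have h3 : ‖(b : ℂ)‖ * ‖n • Complex.exp N - p • (aeval (N : ℂ) g : ℂ)‖
      = |((n * a - p * (b * g.eval N) : ℤ) : ℝ)| := by
    rw [← norm_mul, h2, ← Complex.norm_intCast]
    congr 1
    push_cast
    rw [← hC]
    simp only [zsmul_eq_mul, nsmul_eq_mul]
    ring
  have h4 := hK (p - 1) (by omega)
  have h5 : c * (c ^ (p-1) / ((p-1).factorial : ℝ)) = c ^ p / ((p-1).factorial : ℝ) := by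
    rw [← mul_div_assoc, ← pow_succ', Nat.sub_add_cancel pp.one_le]
  rw [h5] at h4
  have h6 : |((n * a - p * (b * g.eval N) : ℤ) : ℝ)| < 1 := by
    rw [← h3, Complex.norm_intCast]
    exact lt_of_le_of_lt (mul_le_mul_of_nonneg_left h1 (abs_nonneg _)) h4
  have h7 : n * a - p * (b * g.eval N) = 0 := by
    apply Int.abs_lt_one_iff.1
    exact_mod_cast h6
  have h8 : (p : ℤ) ∣ n * a := ⟨b * g.eval N, by linarith⟩
  rcases (Nat.prime_iff_prime_int.1 pp).dvd_or_dvd h8 with h9 | h9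
  · exact hn h9
  · have := Nat.le_of_dvd (Int.natAbs_pos.2 ha) (Int.natCast_dvd.1 h9)
    omega

lemma log_indep (x₁ x₂ N : ℤ) (hx : x₁ ≠ 0) (h : x₁ * Real.log 3 - x₂ * Real.log 2 = (N : ℝ)) :
    False := by
  have l2 : 0 < Real.log 2 := Real.log_pos (by norm_num)
  have l3 : 0 < Real.log 3 := Real.log_pos (by norm_num)
  by_cases hN : N = 0
  · subst hN
    have h1 : (x₁.natAbs : ℝ) * Real.log 3 = (x₂.natAbs : ℝ) * Real.log 2 := by
      have : (x₁ : ℝ) * Real.log 3 = x₂ * Real.log 2 := by push_cast at h; linarith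
      have := congrArg abs this
      rw [abs_mul, abs_mul, abs_of_pos l2, abs_of_pos l3] at this
      simpa [Nat.cast_natAbs] using this
    rw [← Real.log_pow, ← Real.log_pow] at h1
    have h2 := Real.log_injOn_pos (by simp) (by simp) h1
    have h3 : 3 ^ x₁.natAbs = 2 ^ x₂.natAbs := by exact_mod_cast h2
    have h4 : Odd (3 ^ x₁.natAbs) := Odd.pow (by decide)
    by_cases hx2 : x₂.natAbs = 0
    · rw [hx2, pow_zero] at h3
      have := Nat.one_lt_pow (a := 3) (Int.natAbs_ne_zero.2 hx) (by norm_num)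
      omega
    · rw [h3] at h4
      exact Nat.not_even_iff_odd.2 h4 ((even_two).pow_of_ne_zero hx2)
  · have h1 : Real.exp N = (((3 : ℚ) ^ x₁ * 2 ^ (-x₂) : ℚ) : ℝ) := by
      rw [← h, Real.exp_sub, mul_comm, Real.exp_mul, mul_comm, Real.exp_mul,
        Real.exp_log (by norm_num), Real.exp_log (by norm_num), Real.rpow_intCast,
        Real.rpow_intCast]
      push_cast
      rw [zpow_neg, div_eq_mul_inv]
    set q : ℚ := (3 : ℚ) ^ x₁ * 2 ^ (-x₂) with hq
    have hq0 : q ≠ 0 := by positivity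
    refine exp_int_irrat N hN q.num q.den (by simpa using hq0) (by simp) ?_
    rw [h1]
    have := Rat.den_mul_eq_num q
    exact_mod_cast this

lemma part_one (w₁ w₂ : ℤ) (s : ℝ) (hs : 0 < s) :
      ¬ ∃ x₁ x₂ : ℤ, (x₁ : ℝ) = s * (Real.log 2 + (w₁ : ℝ)) ∧
        (x₂ : ℝ) = s * (Real.log 3 + (w₂ : ℝ)) := by
  rintro ⟨x₁, x₂, h1, h2⟩
  have hx : x₁ ≠ 0 := by
    rintro rfl
    have h3 : Real.log 2 + (w₁ : ℝ) = 0 := by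
      rcases mul_eq_zero.1 (h1.symm.trans (by simp)) with h | h
      · exact absurd h hs.ne'
      · exact h
    have a := Real.log_two_gt_d9
    have b := Real.log_two_lt_d9
    have c : (w₁ : ℝ) < (0 : ℤ) := by push_cast; linarith
    have d : ((-1 : ℤ) : ℝ) < w₁ := by push_cast; linarith
    have c' := Int.cast_lt.1 c
    have d' := Int.cast_lt.1 d
    omega
  refine log_indep x₁ x₂ (x₂ * w₁ - x₁ * w₂) hx ?_
  push_cast
  rw [h1, h2]
  ring

/-- no dilate of an integer translate of the affine space
`{x : x₁ = ln 2, x₂ = ln 3}` contains a lattice point. -/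
theorem stmt18 :
    (∀ (w₁ w₂ : ℤ) (s : ℝ), 0 < s →
      ¬ ∃ x₁ x₂ : ℤ, (x₁ : ℝ) = s * (Real.log 2 + (w₁ : ℝ)) ∧
        (x₂ : ℝ) = s * (Real.log 3 + (w₂ : ℝ))) ∧
    ∀ (d : ℕ) (hd : 2 ≤ d), ∀ (w : Fin d → ℤ) (s : ℝ), 0 < s →
      ∀ x ∈ s • translateSet
          {y : Fin d → ℝ | y ⟨0, by omega⟩ = Real.log 2 ∧ y ⟨1, by omega⟩ = Real.log 3}
          (fun i => (w i : ℝ)),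
        x ∉ latticePts d := by
  refine ⟨part_one, ?_⟩
  intro d hd w s hs x hx hl
  obtain ⟨y, ⟨z, ⟨hz1, hz2⟩, rfl⟩, rfl⟩ := hx
  obtain ⟨m₁, h1⟩ := hl ⟨0, by omega⟩
  obtain ⟨m₂, h2⟩ := hl ⟨1, by omega⟩
  refine part_one (w ⟨0, by omega⟩) (w ⟨1, by omega⟩) s hs ⟨m₁, m₂, ?_, ?_⟩
  · rw [← h1, ← hz1]; rfl
  · rw [← h2, ← hz2]; rfl
end

section
/- Let P ⊆ ℝ^d be a full-dimensional polytope which does not contain the origin, let v be any point of P, and let λ > μ ≥ 0 be real numbers. Then vol(conv((P + μv) ∪ {0})) < vol(conv((P + λv) ∪ {0})), where vol denotes Lebesgue measure on ℝ^d; that is, the volume of the pseudopyramid ppyr(P + tv) = conv((P + tv) ∪ {0}) is strictly increasing in t ≥ 0. -/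
open Set MeasureTheory Pointwise

lemma ppyr_volume {d : ℕ} (P : Set (Fin d → ℝ)) (w : Fin d → ℝ) :
    volume (convexHull ℝ (translateSet P w ∪ {0})) = volume (convexHull ℝ (insert (-w) P)) := by
  have h : translateSet P w ∪ {0} = w +ᵥ (insert (-w) P) := by
    ext x
    simp only [translateSet, Set.mem_union, Set.mem_image, Set.mem_singleton_iff,
      Set.mem_vadd_set, Set.mem_insert_iff, vadd_eq_add]
    constructor
    · rintro (⟨y, hy, rfl⟩ | rfl)
      · exact ⟨y, Or.inr hy, add_comm _ _⟩
      · exact ⟨-w, Or.inl rfl, by simp⟩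
    · rintro ⟨y, rfl | hy, rfl⟩
      · right; simp
      · exact Or.inl ⟨y, hy, add_comm _ _⟩
  rw [h, convexHull_vadd, measure_vadd]

/-- the volume of the pseudopyramid `conv((P + t•v) ∪ {0})` is strictly
increasing in `t ≥ 0`, for a full-dimensional polytope `P` not containing the origin
and `v ∈ P`. -/
theorem stmt19 {d : ℕ} (P : Set (Fin d → ℝ)) (hP : IsPolytope P)
    (hfull : (interior P).Nonempty) (h0 : (0 : Fin d → ℝ) ∉ P)
    (v : Fin d → ℝ) (hv : v ∈ P) (mu fl : ℝ) (hmu : 0 ≤ mu) (hfl : mu < fl) :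
    volume (convexHull ℝ (translateSet P (mu • v) ∪ {0})) <
    volume (convexHull ℝ (translateSet P (fl • v) ∪ {0})) := by
  have hPc : Convex ℝ P := by
    obtain ⟨V, -, rfl⟩ := hP
    exact convex_convexHull _ _
  have hcomp : ∀ t : ℝ, IsCompact (convexHull ℝ (insert (-(t • v)) P)) := by
    intro t
    obtain ⟨V, -, rfl⟩ := hP
    have : convexHull ℝ (insert (-(t • v)) (convexHull ℝ (V : Set (Fin d → ℝ)))) =
        convexHull ℝ (insert (-(t • v)) (V : Set (Fin d → ℝ))) := by
      rw [Set.insert_eq, Set.insert_eq, convexHull_convexHull_union_right]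
    rw [this]
    exact (V.finite_toSet.insert _).isCompact_convexHull ℝ
  rw [ppyr_volume, ppyr_volume]
  set A := convexHull ℝ (insert (-(mu • v)) P) with hA
  set B := convexHull ℝ (insert (-(fl • v)) P) with hB
  have hPB : P ⊆ B := (Set.subset_insert _ _).trans (subset_convexHull ℝ _)
  have hlB : -(fl • v) ∈ B := subset_convexHull ℝ _ (Set.mem_insert _ _)
  have hBc : Convex ℝ B := convex_convexHull _ _
  have hAB : A ⊆ B := by
    refine convexHull_min (Set.insert_subset ?_ hPB) hBc
    have hpos : 0 < 1 + fl := by linarith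
    have h := hBc (hPB hv) hlB (a := (fl - mu) / (1 + fl)) (b := (1 + mu) / (1 + fl))
      (div_nonneg (by linarith) hpos.le) (div_nonneg (by linarith) hpos.le)
      (by field_simp; ring)
    convert h using 1
    rw [← smul_neg, ← neg_smul, smul_neg, ← neg_smul, smul_smul, ← add_smul]
    congr 1
    field_simp
    ring
  have hnot : -(fl • v) ∉ A := by
    intro h
    rw [hA, convexHull_insert ⟨v, hv⟩, hPc.convexHull_eq, mem_convexJoin] at h
    obtain ⟨x, rfl, p, hp, b, a, hb, ha, hab, h⟩ := h
    have hbm : 0 < fl - b * mu := by nlinarith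
    have hs : 0 < a + (fl - b * mu) := by linarith
    apply h0
    have hc := hPc hp hv (a := a / (a + (fl - b * mu))) (b := (fl - b * mu) / (a + (fl - b * mu)))
      (div_nonneg ha hs.le) (div_nonneg hbm.le hs.le) (by field_simp)
    convert hc using 1
    ext i
    have hi := congrFun h i
    simp only [Pi.add_apply, Pi.smul_apply, Pi.neg_apply, smul_eq_mul, Pi.zero_apply] at hi ⊢
    field_simp
    linarith
  have hAm : MeasurableSet A := (hcomp mu).isClosed.measurableSet
  have hBint : (interior B).Nonempty := hfull.mono (interior_mono hPB)
  have hcl : -(fl • v) ∈ closure (interior B) := by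
    rw [hBc.closure_interior_eq_closure_of_nonempty_interior hBint]
    exact subset_closure hlB
  have hne : (Aᶜ ∩ interior B).Nonempty :=
    mem_closure_iff.1 hcl _ (hcomp mu).isClosed.isOpen_compl hnot
  have hpos : 0 < volume (Aᶜ ∩ interior B) :=
    ((hcomp mu).isClosed.isOpen_compl.inter isOpen_interior).measure_pos _ hne
  have hpos2 : 0 < volume (B \ A) :=
    hpos.trans_le (measure_mono fun x hx => ⟨interior_subset hx.2, hx.1⟩)
  rw [← measure_sdiff_add_inter B hAm, Set.inter_eq_self_of_subset_right hAB, add_comm]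
  exact ENNReal.lt_add_right (hcomp mu).measure_lt_top.ne hpos2.ne'
end
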